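/- arXiv:0903.2508 — 6 statements merged into one kernel-verified Lean document; each statement's English description precedes it below -/
import Mathlib

section
/- Fix an integer d ≥ 2 and a real ε > 0. There exists a constant C > 0 (depending only on d and ε) such that for every power q of an odd prime, every subset A ⊆ F_q with |A| ≥ C·(q^{d/(2d−1)} + q^{(d²−d+4)/(2(d²−d+2))}), and every t ∈ F_q with t ≠ 0, one has |N_d(A;t) − |A|^{d²}/q| ≤ ε·|A|^{d²}/q. -/
/-!
Expand the determinant along the first row: `det = x ⬝ᵥ cof M`, where `x` is the first row, `M`
consists of the remaining rows and `cof M` is its vector of signed maximal minors. For `t ≠ 0` only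
the `M` with `cof M ≠ 0` matter, and all but `O(1 / |A|)` of the `M` over `A` are of this kind
(`card_mats_le_good`). Write `a = |A|` and `q = |F|`.

**From determinants to an energy.** Apply Cauchy-Schwarz in `x ∈ A ^ d` and extend the sum over `x`
to all of `F ^ d`. For linearly independent `y`, `y'` the forms `x ⬝ᵥ y`, `x ⬝ᵥ y'` are
independent, and for `y' = c • y`, `c ≠ 1`, they cannot both equal `t ≠ 0`; so only the pairs with
`cof M = cof M'` contribute, and the squared error is at most
`a ^ d * q ^ (d - 1) * #{cof M = cof M'}` (`discrepancy_sq_le`). A pair with `cof M = cof M'` is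
determined by two minors with the same nonzero determinant and one column of `M`, so its number is
at most `d * a ^ (d - 1) * E (d - 1)`, where `E m` is the sum over `t ≠ 0` of the squares of the
numbers `N_m(t)` of `m × m` matrices over `A` with determinant `t` (`card_cof_eq_le`).

**The energy.** A dual version of the same argument, in which the discrepancy itself is used as a
test function, bounds the variance of `t ↦ N_m(t)` by `a ^ m * q ^ (m - 1)` times the number of
pairs with *parallel* cofactor vectors (`sum_discrepancy_sq_le`). Parallel cofactor vectors mean
that the rows of both matrices lie on one hyperplane, so this number is at most the sum of
`h ^ (2 * (m - 1))` over all hyperplanes, `h` being the number of points of `A ^ m` on the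
hyperplane (`card_par_cof_le`). Finally `h ≤ a ^ (m - 1)`, and the variance of `h` is
controlled by the pairs of parallel vectors in `A ^ m` (`sum_hypDev_sq_le`). This gives
`q * E m = O (a ^ (2 * m ^ 2) + q ^ (2 * m - 2) * a ^ (2 * m ^ 2 - 4 * m + 5))` for `m ≥ 2`
(`energy_le`), while `E 1 ≤ a`.

**Exponents.** With `m = d - 1`, the first term is admissible when `a ^ (2 * d - 1)` exceeds
`q ^ d` by a large constant factor; the second term requires `q ^ 5` to be small against `a ^ 8`
when `d = 3` and nothing new when `d ≥ 4`; for `d = 2` the condition is that `q ^ 3` is small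
against `a ^ 4`.
-/

/-- `matCount F d A t` is the number of `d × d` matrices over `F` all of whose entries
lie in `A` and whose determinant equals `t`. -/
noncomputable def matCount (F : Type) [CommRing F] [Fintype F] (d : ℕ) (A : Finset F) (t : F) : ℕ :=
  Nat.card {M : Matrix (Fin d) (Fin d) F // (∀ i j, M i j ∈ A) ∧ M.det = t}

namespace RestrictedDet

open Finset Matrix

set_option linter.unusedSectionVars false

variable {F : Type} [Field F] [Fintype F] [DecidableEq F]

/-! ### Second moments of linear forms over a finite field -/

/-- A surjective homomorphism of finite groups pushes the uniform distribution to the uniform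
distribution. -/
lemma sum_comp_surj {V W : Type} [AddCommGroup V] [AddCommGroup W] [Fintype V] [Fintype W]
    [DecidableEq W] (φ : V →+ W) (hφ : Function.Surjective φ) (f : W → ℝ) :
    (Fintype.card W : ℝ) * ∑ x, f (φ x) = (Fintype.card V : ℝ) * ∑ w, f w := by
  have hfib : ∀ w, #{x | φ x = w} = #{x | φ x = 0} := fun w =>
    AddMonoidHom.card_fiber_eq_of_mem_range φ (by simpa using hφ w) (by simpa using hφ 0)
  have hcard : Fintype.card V = Fintype.card W * #{x | φ x = 0} := by
    rw [← Finset.card_univ, Finset.card_eq_sum_card_fiberwise (t := univ) (f := φ) (by simp)]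
    simp [hfib]
  have hsum : ∑ x, f (φ x) = ∑ w, (#{x | φ x = 0} : ℝ) * f w := by
    rw [← Finset.sum_fiberwise univ φ]
    refine Finset.sum_congr rfl fun w _ => ?_
    rw [Finset.sum_congr rfl (g := fun _ => f w) (by simp +contextual), ← hfib w]
    simp
  rw [hsum, hcard, ← Finset.mul_sum]
  push_cast; ring

lemma sum_dot {k : ℕ} {y : Fin (k + 1) → F} (hy : y ≠ 0) (f : F → ℝ) :
    ∑ x : Fin (k + 1) → F, f (x ⬝ᵥ y) = (Fintype.card F : ℝ) ^ k * ∑ s, f s := by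
  obtain ⟨i, hi⟩ := Function.ne_iff.mp hy
  simp only [Pi.zero_apply] at hi
  have h := sum_comp_surj (V := Fin (k + 1) → F) (W := F)
    { toFun := fun x => x ⬝ᵥ y, map_zero' := by simp, map_add' := by simp [add_dotProduct] }
    (fun s => ⟨Pi.single i (s / y i), by simp [hi]⟩) f
  have hq : (Fintype.card F : ℝ) ≠ 0 := by exact_mod_cast Fintype.card_ne_zero
  simp only [AddMonoidHom.coe_mk, ZeroHom.coe_mk, Fintype.card_pi, prod_const, card_univ,
    Fintype.card_fin] at h
  apply mul_left_cancel₀ hq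
  rw [h]; push_cast; ring

/-- For linearly independent `y`, `y'` the values `x ⬝ᵥ y`, `x ⬝ᵥ y'` are independent when `x` is
uniform on `F ^ (k + 1)`, so a mean-zero function of the first is orthogonal to every function of
the second. -/
lemma sum_dot_dot_indep {k : ℕ} {y y' : Fin (k + 1) → F} (hy : y ≠ 0)
    (hyy : ∀ c : F, y' ≠ c • y) (f g : F → ℝ) (hf : ∑ s, f s = 0) :
    ∑ x : Fin (k + 1) → F, f (x ⬝ᵥ y) * g (x ⬝ᵥ y') = 0 := by
  obtain ⟨i, hi⟩ := Function.ne_iff.mp hy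
  simp only [Pi.zero_apply] at hi
  obtain ⟨j, hj⟩ := Function.ne_iff.mp (hyy (y' i / y i))
  simp only [Pi.smul_apply, smul_eq_mul] at hj
  have hD : y i * y' j - y j * y' i ≠ 0 := by
    intro h
    apply hj
    field_simp
    linear_combination h
  -- The preimage of `(s, t)` supported on the coordinates `i`, `j` is given by Cramer's rule.
  have h := sum_comp_surj (V := Fin (k + 1) → F) (W := F × F)
    { toFun := fun x => (x ⬝ᵥ y, x ⬝ᵥ y'), map_zero' := by simp,
      map_add' := by simp [add_dotProduct] }
    (fun st => ⟨Pi.single i ((st.1 * y' j - st.2 * y j) / (y i * y' j - y j * y' i)) +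
      Pi.single j ((st.2 * y i - st.1 * y' i) / (y i * y' j - y j * y' i)), by
        ext <;> simp only [AddMonoidHom.coe_mk, ZeroHom.coe_mk, add_dotProduct,
          single_dotProduct]
        all_goals
          rw [div_mul_eq_mul_div, div_mul_eq_mul_div, ← add_div, div_eq_iff hD]
          ring⟩) (fun st => f st.1 * g st.2)
  have hq : (Fintype.card (F × F) : ℝ) ≠ 0 := by exact_mod_cast Fintype.card_ne_zero
  apply mul_left_cancel₀ hq
  simp only [AddMonoidHom.coe_mk, ZeroHom.coe_mk] at h
  rw [h, Fintype.sum_prod_type]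
  simp only [← Finset.mul_sum, ← Finset.sum_mul, hf]
  simp

lemma sum_mul_dilate_le (f : F → ℝ) {c : F} (hc : c ≠ 0) :
    ∑ s, f s * f (c * s) ≤ ∑ s, f s ^ 2 := by
  have h1 : ∑ s, f (c * s) ^ 2 = ∑ s, f s ^ 2 :=
    Fintype.sum_bijective (fun s => c * s) (mulLeft_bijective₀ c hc) _ _ fun _ => rfl
  have h2 : ∑ s, f s * f (c * s) ≤ ∑ s, (f s ^ 2 + f (c * s) ^ 2) / 2 :=
    Finset.sum_le_sum fun s _ => by nlinarith [sq_nonneg (f s - f (c * s))]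
  rw [← Finset.sum_div, Finset.sum_add_distrib, h1] at h2
  linarith

/-- The centred indicator of the point `t`; its values sum to zero over `F`. -/
noncomputable def bal (t s : F) : ℝ := (if s = t then 1 else 0) - 1 / (Fintype.card F : ℝ)

lemma card_pos_real : (0 : ℝ) < Fintype.card F := by exact_mod_cast Fintype.card_pos

lemma sum_bal (t : F) : ∑ s, bal t s = 0 := by
  have := (card_pos_real (F := F)).ne'
  simp only [bal, Finset.sum_sub_distrib, Finset.sum_ite_eq', Finset.mem_univ, if_true,
    Finset.sum_const, Finset.card_univ, nsmul_eq_mul]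
  field_simp; simp

lemma sum_bal_left (s : F) : ∑ t, bal t s = 0 := by
  have := (card_pos_real (F := F)).ne'
  simp only [bal, Finset.sum_sub_distrib, Finset.sum_ite_eq, Finset.mem_univ, if_true,
    Finset.sum_const, Finset.card_univ, nsmul_eq_mul]
  field_simp; simp

lemma sum_bal_sq_le (t : F) : ∑ s, bal t s ^ 2 ≤ 1 := by
  have hq := card_pos_real (F := F)
  have h : ∀ s : F, bal t s ^ 2 =
      (if s = t then 1 else 0) * (1 - 1 / (Fintype.card F : ℝ)) -
        1 / (Fintype.card F : ℝ) * bal t s := by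
    intro s; unfold bal; split_ifs <;> ring
  simp only [h, Finset.sum_sub_distrib, ← Finset.mul_sum, sum_bal, ← Finset.sum_mul]
  simp

/-- The point masses at `t` and at `c⁻¹ * t` are disjoint, so their centred versions are
negatively correlated. -/
lemma sum_bal_dilate_nonpos {t c : F} (ht : t ≠ 0) (hc : c ≠ 1) (hc0 : c ≠ 0) :
    ∑ s, bal t s * bal t (c * s) ≤ 0 := by
  have hq := card_pos_real (F := F)
  have h : ∀ s : F, bal t s * bal t (c * s) =
      (if s = t then 1 else 0) * (if c * s = t then 1 else 0)
        - 1 / (Fintype.card F : ℝ) * bal t (c * s)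
        - 1 / (Fintype.card F : ℝ) * (if s = t then 1 else 0) := by
    intro s; unfold bal; split_ifs <;> ring
  have h0 : ∀ s : F, (if s = t then (1 : ℝ) else 0) * (if c * s = t then 1 else 0) = 0 := by
    intro s
    by_cases h1 : s = t
    · subst h1
      have : c * s ≠ s := fun h => hc (mul_right_cancel₀ ht (by rw [h, one_mul]))
      simp [this]
    · simp [h1]
  have h1 : ∑ s, bal t (c * s) = 0 := by
    rw [← sum_bal t]
    exact Fintype.sum_bijective (fun s => c * s) (mulLeft_bijective₀ c hc0) _ _ fun _ => rfl
  simp only [h, h0, Finset.sum_sub_distrib, ← Finset.mul_sum, h1]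
  simp

lemma sum_sq_expand {k : ℕ} {ι : Type} (S : Finset ι) (v : ι → Fin (k + 1) → F) (f : F → ℝ) :
    ∑ x : Fin (k + 1) → F, (∑ i ∈ S, f (x ⬝ᵥ v i)) ^ 2 =
      ∑ p ∈ S ×ˢ S, ∑ x : Fin (k + 1) → F, f (x ⬝ᵥ v p.1) * f (x ⬝ᵥ v p.2) := by
  rw [Finset.sum_comm]
  refine Finset.sum_congr rfl fun x _ => ?_
  rw [sq, Finset.sum_mul_sum, Finset.sum_product]

lemma sum_dot_smul {k : ℕ} {y : Fin (k + 1) → F} (hy : y ≠ 0) (c : F) (f : F → ℝ) :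
    ∑ x : Fin (k + 1) → F, f (x ⬝ᵥ y) * f (x ⬝ᵥ (c • y)) =
      (Fintype.card F : ℝ) ^ k * ∑ s, f s * f (c * s) := by
  rw [← sum_dot hy (fun s => f s * f (c * s))]
  simp [dotProduct_smul]

/-- Two vectors are parallel when they differ by a nonzero scalar. -/
def Par {n : ℕ} (y y' : Fin n → F) : Prop := ∃ c : F, c ≠ 0 ∧ y' = c • y

open Classical in
lemma sum_sq_le_par {k : ℕ} {ι : Type} (S : Finset ι) (v : ι → Fin (k + 1) → F)
    (hv : ∀ i ∈ S, v i ≠ 0) (f : F → ℝ) (hf : ∑ s, f s = 0) :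
    ∑ x : Fin (k + 1) → F, (∑ i ∈ S, f (x ⬝ᵥ v i)) ^ 2 ≤
      (Fintype.card F : ℝ) ^ k * (∑ s, f s ^ 2) * #{p ∈ S ×ˢ S | Par (v p.1) (v p.2)} := by
  rw [sum_sq_expand, Finset.card_filter, Nat.cast_sum, Finset.mul_sum]
  refine Finset.sum_le_sum fun p hp => ?_
  rw [Finset.mem_product] at hp
  have h1 := hv _ hp.1
  by_cases hpar : Par (v p.1) (v p.2)
  · rw [if_pos hpar]
    obtain ⟨c, hc, hc'⟩ := hpar
    rw [hc', sum_dot_smul h1, Nat.cast_one, mul_one]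
    exact mul_le_mul_of_nonneg_left (sum_mul_dilate_le f hc) (by positivity)
  · rw [if_neg hpar, sum_dot_dot_indep h1 _ f f hf]
    · simp
    · intro c h
      by_cases hc : c = 0
      · exact hv _ hp.2 (by rw [h, hc, zero_smul])
      · exact hpar ⟨c, hc, h⟩

lemma sum_sq_le_eq {k : ℕ} {ι : Type} (S : Finset ι) (v : ι → Fin (k + 1) → F)
    (hv : ∀ i ∈ S, v i ≠ 0) {t : F} (ht : t ≠ 0) :
    ∑ x : Fin (k + 1) → F, (∑ i ∈ S, bal t (x ⬝ᵥ v i)) ^ 2 ≤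
      (Fintype.card F : ℝ) ^ k * #{p ∈ S ×ˢ S | v p.1 = v p.2} := by
  rw [sum_sq_expand, Finset.card_filter, Nat.cast_sum, Finset.mul_sum]
  refine Finset.sum_le_sum fun p hp => ?_
  rw [Finset.mem_product] at hp
  have h1 := hv _ hp.1
  by_cases heq : v p.1 = v p.2
  · rw [if_pos heq, ← heq, Nat.cast_one]
    have := sum_dot h1 (fun s => bal t s ^ 2)
    simp only [← sq]
    rw [this]
    exact mul_le_mul_of_nonneg_left (sum_bal_sq_le t) (by positivity)
  · rw [if_neg heq, Nat.cast_zero, mul_zero]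
    by_cases hpar : ∃ c : F, v p.2 = c • v p.1
    · obtain ⟨c, hc⟩ := hpar
      rw [hc, sum_dot_smul h1]
      refine mul_nonpos_of_nonneg_of_nonpos (by positivity) (sum_bal_dilate_nonpos ht ?_ ?_)
      · rintro rfl; exact heq (by rw [hc, one_smul])
      · rintro rfl; exact hv _ hp.2 (by rw [hc, zero_smul])
    · push Not at hpar
      rw [sum_dot_dot_indep h1 hpar _ _ (sum_bal t)]

/-- Incidence bound for a single nonzero value `t` of the form `x ⬝ᵥ v i`: only pairs of equal
vectors contribute to the second moment. -/
lemma discrepancy_sq_le {k : ℕ} {ι : Type} (X : Finset (Fin (k + 1) → F)) (S : Finset ι)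
    (v : ι → Fin (k + 1) → F) (hv : ∀ i ∈ S, v i ≠ 0) {t : F} (ht : t ≠ 0) :
    (∑ x ∈ X, ∑ i ∈ S, bal t (x ⬝ᵥ v i)) ^ 2 ≤
      #X * ((Fintype.card F : ℝ) ^ k * #{p ∈ S ×ˢ S | v p.1 = v p.2}) := by
  refine (sq_sum_le_card_mul_sum_sq).trans ?_
  refine mul_le_mul_of_nonneg_left (le_trans ?_ (sum_sq_le_eq S v hv ht)) (by positivity)
  exact Finset.sum_le_sum_of_subset_of_nonneg (Finset.subset_univ _) fun _ _ _ => sq_nonneg _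

open Classical in
/-- Incidence bound in mean square over all values `t`. Bounding each `t` by itself would lose a
factor of `q` in the range of interest, so the discrepancy `D` is paired with itself: the sum of
`D t ^ 2` equals the sum of `D (x ⬝ᵥ v i)`, to which Cauchy-Schwarz in `x` is applied. -/
lemma sum_discrepancy_sq_le {k : ℕ} {ι : Type} (X : Finset (Fin (k + 1) → F)) (S : Finset ι)
    (v : ι → Fin (k + 1) → F) (hv : ∀ i ∈ S, v i ≠ 0) :
    ∑ t, (∑ x ∈ X, ∑ i ∈ S, bal t (x ⬝ᵥ v i)) ^ 2 ≤
      #X * ((Fintype.card F : ℝ) ^ k * #{p ∈ S ×ˢ S | Par (v p.1) (v p.2)}) := by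
  set D : F → ℝ := fun t => ∑ x ∈ X, ∑ i ∈ S, bal t (x ⬝ᵥ v i) with hD
  set G : ℕ := #{p ∈ S ×ˢ S | Par (v p.1) (v p.2)}
  have hD0 : ∑ t, D t = 0 := by
    simp only [hD]
    rw [Finset.sum_comm]
    refine Finset.sum_eq_zero fun x _ => ?_
    rw [Finset.sum_comm]
    exact Finset.sum_eq_zero fun i _ => sum_bal_left _
  have hconv : ∀ s : F, ∑ t, D t * bal t s = D s := by
    intro s
    simp only [bal, mul_sub, Finset.sum_sub_distrib, ← Finset.sum_mul, hD0]
    simp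
  have h1 : ∑ t, D t ^ 2 = ∑ x ∈ X, ∑ i ∈ S, D (x ⬝ᵥ v i) := by
    calc ∑ t, D t ^ 2 = ∑ t, ∑ x ∈ X, ∑ i ∈ S, D t * bal t (x ⬝ᵥ v i) := by
          refine Finset.sum_congr rfl fun t _ => ?_
          simp only [← Finset.mul_sum]
          rw [sq]
      _ = ∑ x ∈ X, ∑ i ∈ S, ∑ t, D t * bal t (x ⬝ᵥ v i) := by
          rw [Finset.sum_comm]
          refine Finset.sum_congr rfl fun x _ => Finset.sum_comm
      _ = _ := by simp only [hconv]
  have h2 : (∑ t, D t ^ 2) ^ 2 ≤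
      #X * ((Fintype.card F : ℝ) ^ k * (∑ t, D t ^ 2) * G) := by
    rw [h1, ← h1]
    nth_rewrite 1 [h1]
    refine (sq_sum_le_card_mul_sum_sq).trans ?_
    refine mul_le_mul_of_nonneg_left (le_trans ?_ (sum_sq_le_par S v hv D hD0)) (by positivity)
    exact Finset.sum_le_sum_of_subset_of_nonneg (Finset.subset_univ _) fun _ _ _ => sq_nonneg _
  rcases (Finset.sum_nonneg fun t _ => sq_nonneg (D t) : 0 ≤ ∑ t, D t ^ 2).eq_or_lt with h | h
  · rw [← h]; positivity
  · refine le_of_mul_le_mul_right ?_ h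
    calc _ = (∑ t, D t ^ 2) ^ 2 := by rw [sq]
      _ ≤ _ := h2
      _ = _ := by ring

/-! ### Matrices with entries in `A` and their cofactor vectors -/

/-- The vectors of length `n` with entries in `A`. -/
def vecs (n : ℕ) (A : Finset F) : Finset (Fin n → F) := Fintype.piFinset fun _ => A

/-- The `m × n` matrices with entries in `A`. -/
def mats (m n : ℕ) (A : Finset F) : Finset (Matrix (Fin m) (Fin n) F) :=
  Fintype.piFinset fun _ => vecs n A

/-- The vector of signed maximal minors of an `m × (m + 1)` matrix, that is, the cofactors of a
row placed on top of it. -/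
def cof {m : ℕ} (M : Matrix (Fin m) (Fin (m + 1)) F) : Fin (m + 1) → F :=
  fun j => (-1) ^ (j : ℕ) * (M.submatrix id j.succAbove).det

/-- The `m × (m + 1)` matrices over `A` of full rank, full rank being expressed by the
non-vanishing of the cofactor vector. -/
def good (m : ℕ) (A : Finset F) : Finset (Matrix (Fin m) (Fin (m + 1)) F) :=
  {M ∈ mats m (m + 1) A | cof M ≠ 0}

/-- The number of `m × m` matrices over `A` with determinant `t`. -/
def detCount (m : ℕ) (A : Finset F) (t : F) : ℕ := #{U ∈ mats m m A | U.det = t}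

lemma mem_vecs {n : ℕ} {A : Finset F} {x : Fin n → F} : x ∈ vecs n A ↔ ∀ i, x i ∈ A := by
  simp [vecs]

lemma mem_mats {m n : ℕ} {A : Finset F} {M : Matrix (Fin m) (Fin n) F} :
    M ∈ mats m n A ↔ ∀ i j, M i j ∈ A :=
  Fintype.mem_piFinset.trans (forall_congr' fun _ => mem_vecs)

lemma card_vecs (n : ℕ) (A : Finset F) : #(vecs n A) = #A ^ n := by
  simp [vecs]

lemma card_mats (m n : ℕ) (A : Finset F) : #(mats m n A) = #A ^ (m * n) :=
  (Fintype.card_piFinset fun _ : Fin m => vecs n A).trans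
    (by simp [card_vecs, ← pow_mul, mul_comm])

lemma det_eq_dot_cof {m : ℕ} (U : Matrix (Fin (m + 1)) (Fin (m + 1)) F) :
    U.det = U 0 ⬝ᵥ cof (U.submatrix Fin.succ id) := by
  rw [det_succ_row_zero]
  simp only [dotProduct, cof, submatrix_submatrix]
  refine Finset.sum_congr rfl fun j _ => ?_
  simp only [Function.comp_id, Function.id_comp]
  ring

lemma row_dot_cof {m : ℕ} (M : Matrix (Fin m) (Fin (m + 1)) F) (i : Fin m) :
    M i ⬝ᵥ cof M = 0 := by
  have h := det_eq_dot_cof (Matrix.of (Fin.cons (M i) M : Fin (m + 1) → Fin (m + 1) → F))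
  rw [Matrix.det_zero_of_row_eq (i := 0) (j := i.succ) (Fin.succ_ne_zero i).symm rfl] at h
  exact h.symm

lemma card_dot_le {k : ℕ} (A : Finset F) {z : Fin (k + 1) → F} (hz : z ≠ 0) (t : F) :
    #{x ∈ vecs (k + 1) A | x ⬝ᵥ z = t} ≤ #A ^ k := by
  obtain ⟨i, hi⟩ := Function.ne_iff.mp hz
  simp only [Pi.zero_apply] at hi
  rw [← card_vecs]
  refine Finset.card_le_card_of_injOn (fun x l => x (i.succAbove l)) ?_ ?_
  · intro x hx
    simp only [coe_filter, Set.mem_ofPred_eq, mem_vecs] at hx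
    simp only [mem_coe, mem_vecs]
    exact fun l => hx.1 _
  · intro x hx x' hx' h
    simp only [coe_filter, Set.mem_ofPred_eq, dotProduct, Fin.sum_univ_succAbove _ i] at hx hx'
    have h' : ∀ l, x (i.succAbove l) = x' (i.succAbove l) := fun l => congrFun h l
    have h2 := hx.2.trans hx'.2.symm
    simp only [h'] at h2
    have h3 : x i = x' i := mul_right_cancel₀ hi (add_right_cancel h2)
    funext l
    rcases Fin.eq_self_or_eq_succAbove i l with rfl | ⟨l', rfl⟩
    · exact h3
    · exact h' l'

lemma detCount_succ (m : ℕ) (A : Finset F) (t : F) :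
    detCount (m + 1) A t =
      ∑ M ∈ mats m (m + 1) A, #{x ∈ vecs (m + 1) A | x ⬝ᵥ cof M = t} := by
  have h : detCount (m + 1) A t =
      #{p ∈ mats m (m + 1) A ×ˢ vecs (m + 1) A | p.2 ⬝ᵥ cof p.1 = t} := by
    unfold detCount
    refine Finset.card_nbij' (fun U => (U.submatrix Fin.succ id, U 0))
      (fun p => Matrix.of (Fin.cons p.2 p.1)) ?_ ?_ ?_ ?_
    · intro U hU
      simp only [coe_filter, Set.mem_ofPred_eq, mem_product, mem_vecs, mem_mats] at hU ⊢
      exact ⟨⟨fun i j => hU.1 _ _, fun j => hU.1 _ _⟩, by rw [← det_eq_dot_cof]; exact hU.2⟩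
    · intro p hp
      simp only [coe_filter, Set.mem_ofPred_eq, mem_product, mem_vecs, mem_mats] at hp ⊢
      refine ⟨fun i j => ?_, ?_⟩
      · refine Fin.cases ?_ (fun i => ?_) i
        · exact hp.1.2 j
        · exact hp.1.1 i j
      · rw [det_eq_dot_cof]; exact hp.2
    · intro U _
      ext i j
      refine Fin.cases ?_ (fun i => ?_) i <;> rfl
    · intro p _
      rfl
  rw [h, Finset.card_filter, Finset.sum_product]
  simp only [Finset.card_filter]

lemma detCount_succ_good (m : ℕ) (A : Finset F) {t : F} (ht : t ≠ 0) :
    detCount (m + 1) A t = ∑ M ∈ good m A, #{x ∈ vecs (m + 1) A | x ⬝ᵥ cof M = t} := by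
  rw [detCount_succ]
  unfold good
  rw [Finset.sum_filter]
  refine Finset.sum_congr rfl fun M _ => ?_
  split_ifs with h
  · rfl
  · have h : cof M = 0 := by simpa using h
    simp [h, ht.symm]

/-- A rank-deficient matrix has a singular first minor. -/
lemma card_bad_le (m : ℕ) (A : Finset F) :
    #{M ∈ mats m (m + 1) A | cof M = 0} ≤ #A ^ m * detCount m A 0 := by
  rw [← card_vecs, detCount, ← Finset.card_product]
  refine Finset.card_le_card_of_injOn
    (fun M => (fun i => M i 0, M.submatrix id Fin.succ)) ?_ ?_
  · intro M hM
    simp only [coe_filter, Set.mem_ofPred_eq, mem_mats, coe_product, Set.mem_prod,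
      mem_coe, mem_vecs] at hM ⊢
    refine ⟨fun i => hM.1 _ _, fun i j => hM.1 _ _, ?_⟩
    have := congrFun hM.2 0
    simpa [cof] using this
  · intro M _ M' _ h
    simp only [Prod.mk.injEq] at h
    ext i j
    refine Fin.cases ?_ (fun j => ?_) j
    · exact congrFun h.1 i
    · exact congrFun (congrFun h.2 i) j

/-- A proportion of at most `m / #A` of the `m × m` matrices over `A` is singular. -/
lemma detCount_zero_le (m : ℕ) (A : Finset F) :
    #A * detCount m A 0 ≤ m * #A ^ (m ^ 2) := by
  induction m with
  | zero => simp [detCount]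
  | succ m ih =>
    have hbad := card_bad_le m A
    have h1 : detCount (m + 1) A 0 ≤ #A ^ (m * (m + 1)) * #A ^ m +
        #{M ∈ mats m (m + 1) A | cof M = 0} * #A ^ (m + 1) := by
      rw [detCount_succ, ← Finset.sum_filter_add_sum_filter_not _ (fun M => cof M ≠ 0)]
      refine add_le_add ?_ ?_
      · refine (Finset.sum_le_card_nsmul _ _ (#A ^ m) fun M hM => ?_).trans ?_
        · exact card_dot_le A (Finset.mem_filter.mp hM).2 0
        · rw [smul_eq_mul, ← card_mats]
          exact Nat.mul_le_mul_right _ (Finset.card_filter_le _ _)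
      · simp only [not_not]
        refine (Finset.sum_le_card_nsmul _ _ (#A ^ (m + 1)) fun M hM => ?_).trans ?_
        · rw [← card_vecs]; exact Finset.card_filter_le _ _
        · rw [smul_eq_mul]
    calc #A * detCount (m + 1) A 0
        ≤ #A * (#A ^ (m * (m + 1)) * #A ^ m + (#A ^ m * detCount m A 0) * #A ^ (m + 1)) := by
          gcongr; exact h1.trans (by gcongr)
      _ = #A ^ ((m + 1) ^ 2) + #A ^ (2 * m + 1) * (#A * detCount m A 0) := by ring
      _ ≤ #A ^ ((m + 1) ^ 2) + #A ^ (2 * m + 1) * (m * #A ^ (m ^ 2)) := by gcongr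
      _ = (m + 1 : ℕ) * #A ^ ((m + 1) ^ 2) := by ring

lemma card_mats_le_good (m : ℕ) (A : Finset F) :
    #A * #(mats m (m + 1) A) ≤ #A * #(good m A) + m * #A ^ (m * (m + 1)) := by
  have hbad := card_bad_le m A
  rw [← Finset.card_filter_add_card_filter_not (s := mats m (m + 1) A) (fun M => cof M ≠ 0)]
  have h0 := detCount_zero_le m A
  calc _ = #A * #(good m A) + #A * #{M ∈ mats m (m + 1) A | cof M = 0} := by
        simp only [mul_add, not_not, good]
    _ ≤ #A * #(good m A) + #A * (#A ^ m * detCount m A 0) := by gcongr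
    _ = #A * #(good m A) + #A ^ m * (#A * detCount m A 0) := by ring
    _ ≤ #A * #(good m A) + #A ^ m * (m * #A ^ (m ^ 2)) := by gcongr
    _ = _ := by ring

lemma detCount_sub_eq (m : ℕ) (A : Finset F) {t : F} (ht : t ≠ 0) :
    (detCount (m + 1) A t : ℝ) -
      (#A : ℝ) ^ (m + 1) * #(good m A) / (Fintype.card F : ℝ) =
      ∑ x ∈ vecs (m + 1) A, ∑ M ∈ good m A, bal t (x ⬝ᵥ cof M) := by
  rw [detCount_succ_good m A ht, Finset.sum_comm]
  simp only [bal, Finset.sum_sub_distrib, Finset.sum_const, nsmul_eq_mul, card_vecs,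
    Finset.card_filter]
  push_cast
  ring

/-- Two full-rank matrices with the same cofactor vector `y`: if `y j ≠ 0`, they are determined
by their `j`-th minors, which have equal determinants, and the `j`-th column of one. -/
lemma card_cof_eq_le (m : ℕ) (A : Finset F) :
    #{p ∈ good m A ×ˢ good m A | cof p.1 = cof p.2} ≤
      (m + 1) * (#A ^ m * ∑ t ∈ univ.erase 0, detCount m A t ^ 2) := by
  classical
  have hone : ∀ j : Fin (m + 1),
      #{p ∈ good m A ×ˢ good m A | cof p.1 = cof p.2 ∧ cof p.1 j ≠ 0} ≤
        #A ^ m * ∑ t ∈ univ.erase 0, detCount m A t ^ 2 := by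
    intro j
    have hcard : #A ^ m * ∑ t ∈ univ.erase (0 : F), detCount m A t ^ 2 =
        #(vecs m A ×ˢ (univ.erase (0 : F)).sigma fun t =>
          {U ∈ mats m m A | U.det = t} ×ˢ {U ∈ mats m m A | U.det = t}) := by
      rw [Finset.card_product, card_vecs, Finset.card_sigma]
      simp only [Finset.card_product, detCount, sq]
    rw [hcard]
    refine Finset.card_le_card_of_injOn
      (fun p => (fun i => p.1 i j, ⟨(p.1.submatrix id j.succAbove).det,
        p.1.submatrix id j.succAbove, p.2.submatrix id j.succAbove⟩)) ?_ ?_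
    · intro p hp
      simp only [good, coe_filter, Set.mem_ofPred_eq, mem_product, mem_filter, mem_mats] at hp
      obtain ⟨⟨hp1, hp2⟩, heq, hj⟩ := hp
      simp only [coe_product, Set.mem_prod, mem_coe, mem_vecs, mem_sigma, mem_product,
        mem_filter, mem_mats, mem_erase, mem_univ, and_true]
      refine ⟨fun i => hp1.1 _ _, ?_, fun i l => hp1.1 _ _, fun i l => hp2.1 _ _, ?_⟩
      · intro h; apply hj; simp [cof, h]
      · have := congrFun heq j
        simp only [cof] at this
        exact (mul_left_cancel₀ (pow_ne_zero _ (neg_ne_zero.mpr one_ne_zero)) this).symm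
    · rintro ⟨M, N⟩ hp ⟨M', N'⟩ hp' h
      simp only [coe_filter, Set.mem_ofPred_eq] at hp hp'
      simp only [Prod.mk.injEq, Sigma.mk.injEq] at h
      obtain ⟨hcol, hdet, h⟩ := h
      have h := eq_of_heq h
      simp only [Prod.mk.injEq] at h
      have hM : M = M' := by
        ext i l
        rcases Fin.eq_self_or_eq_succAbove j l with rfl | ⟨l', rfl⟩
        · exact congrFun hcol i
        · exact congrFun (congrFun h.1 i) l'
      subst hM
      have hNc : cof N = cof N' := hp.2.1.symm.trans hp'.2.1
      have hNj : cof N' j ≠ 0 := by rw [← hNc, ← hp.2.1]; exact hp.2.2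
      have hN : N = N' := by
        have hs : ∀ i l, N i (j.succAbove l) = N' i (j.succAbove l) :=
          fun i l => congrFun (congrFun h.2 i) l
        ext i l
        rcases Fin.eq_self_or_eq_succAbove j l with rfl | ⟨l', rfl⟩
        · have h1 := row_dot_cof N i
          have h2 := row_dot_cof N' i
          rw [hNc] at h1
          simp only [dotProduct, Fin.sum_univ_succAbove _ l] at h1 h2
          simp only [hs] at h1
          exact mul_right_cancel₀ hNj (add_right_cancel (h1.trans h2.symm))
        · exact hs i l'
      rw [hN]
  have hsub : {p ∈ good m A ×ˢ good m A | cof p.1 = cof p.2} ⊆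
      univ.biUnion fun j : Fin (m + 1) =>
        {p ∈ good m A ×ˢ good m A | cof p.1 = cof p.2 ∧ cof p.1 j ≠ 0} := by
    intro p hp
    simp only [mem_filter, mem_biUnion, mem_univ, true_and] at hp ⊢
    have hg : cof p.1 ≠ 0 := (Finset.mem_filter.mp (Finset.mem_product.mp hp.1).1).2
    obtain ⟨j, hj⟩ := Function.ne_iff.mp hg
    exact ⟨j, hp.1, hp.2, hj⟩
  refine (Finset.card_le_card hsub).trans (Finset.card_biUnion_le.trans ?_)
  refine (Finset.sum_le_card_nsmul _ _ _ fun j _ => hone j).trans ?_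
  simp

lemma matCount_eq (m : ℕ) (A : Finset F) (t : F) : matCount F m A t = detCount m A t := by
  unfold matCount detCount
  exact Nat.subtype_card _ fun U => by simp [mem_mats]

/-! ### Points of `A ^ n` on hyperplanes -/

open Classical in
/-- A vector parallel to a given `x` with `x i ≠ 0` is determined by its `i`-th coordinate, which
lies in `A`. -/
lemma card_par_vecs_le {n : ℕ} (A : Finset F) (S : Finset (Fin n → F)) (hS : S ⊆ vecs n A)
    (h0 : ∀ x ∈ S, x ≠ 0) :
    #{p ∈ S ×ˢ S | Par p.1 p.2} ≤ #A ^ (n + 1) := by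
  have hi : ∀ x : Fin n → F, x ≠ 0 → ∃ i, x i ≠ 0 := fun x hx => Function.ne_iff.mp hx
  rcases Finset.eq_empty_or_nonempty S with rfl | ⟨x₀, hx₀⟩
  · simp
  obtain ⟨i₀, -⟩ := hi x₀ (h0 _ hx₀)
  let ix : (Fin n → F) → Fin n := fun x => if hx : x ≠ 0 then (hi x hx).choose else i₀
  have hix : ∀ x ∈ S, x (ix x) ≠ 0 := by
    intro x hx
    simp only [ix, dif_pos (h0 x hx)]
    exact (hi x (h0 x hx)).choose_spec
  rw [pow_succ, ← card_vecs, ← Finset.card_product]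
  refine Finset.card_le_card_of_injOn (fun p => (p.1, p.2 (ix p.1))) ?_ ?_
  · intro p hp
    simp only [coe_filter, Set.mem_ofPred_eq, mem_product] at hp
    simp only [coe_product, Set.mem_prod, mem_coe]
    exact ⟨hS hp.1.1, mem_vecs.mp (hS hp.1.2) _⟩
  · rintro ⟨x, y⟩ hp ⟨x', y'⟩ hp' h
    simp only [coe_filter, Set.mem_ofPred_eq, mem_product] at hp hp'
    simp only [Prod.mk.injEq] at h
    obtain ⟨rfl, h⟩ := h
    obtain ⟨⟨hx, -⟩, c, -, rfl⟩ := hp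
    obtain ⟨-, c', -, rfl⟩ := hp'
    simp only [Pi.smul_apply, smul_eq_mul] at h
    rw [mul_right_cancel₀ (hix x hx) h]

/-- The number of vectors over `A` on the hyperplane orthogonal to `z`. -/
def hyp (n : ℕ) (A : Finset F) (z : Fin n → F) : ℕ := #{x ∈ vecs n A | x ⬝ᵥ z = 0}

/-- The deviation of the number of nonzero vectors over `A` orthogonal to `z` from its expected
value. The zero vector is left out because it is orthogonal to every `z`. -/
noncomputable def hypDev (n : ℕ) (A : Finset F) (z : Fin n → F) : ℝ :=
  ∑ x ∈ vecs n A with x ≠ 0, bal 0 (z ⬝ᵥ x)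

lemma sum_hypDev_sq_le (k : ℕ) (A : Finset F) :
    ∑ z, hypDev (k + 1) A z ^ 2 ≤ (Fintype.card F : ℝ) ^ k * (#A : ℝ) ^ (k + 2) := by
  classical
  have h := sum_sq_le_par (k := k) {x ∈ vecs (k + 1) A | x ≠ 0} id (by simp) (bal (0 : F))
    (sum_bal 0)
  refine h.trans ?_
  have h2 := card_par_vecs_le A {x ∈ vecs (k + 1) A | x ≠ 0} (Finset.filter_subset _ _) (by simp)
  have h3 := sum_bal_sq_le (0 : F)
  have h4 : (#{p ∈ {x ∈ vecs (k + 1) A | x ≠ 0} ×ˢ {x ∈ vecs (k + 1) A | x ≠ 0} |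
      Par p.1 p.2} : ℝ) ≤ (#A : ℝ) ^ (k + 2) := by exact_mod_cast h2
  calc _ ≤ (Fintype.card F : ℝ) ^ k * 1 * (#A : ℝ) ^ (k + 2) := by
        gcongr
        exact h4
    _ = _ := by ring

lemma hyp_le (n : ℕ) (A : Finset F) (hq : (Fintype.card F : ℝ) ≤ (#A : ℝ) ^ n) (z : Fin n → F) :
    (hyp n A z : ℝ) ≤ hypDev n A z + 2 * ((#A : ℝ) ^ n / (Fintype.card F : ℝ)) := by
  have hq0 := card_pos_real (F := F)
  have h1 : 1 ≤ (#A : ℝ) ^ n / (Fintype.card F : ℝ) := by rwa [le_div_iff₀ hq0, one_mul]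
  have h2 : hyp n A z ≤ #{x ∈ vecs n A | x ≠ 0 ∧ z ⬝ᵥ x = 0} + 1 := by
    unfold hyp
    rw [← Finset.card_singleton (0 : Fin n → F)]
    refine (Finset.card_le_card ?_).trans (Finset.card_union_le _ _)
    intro x hx
    simp only [mem_filter, mem_union, mem_singleton] at hx ⊢
    by_cases hx0 : x = 0
    · exact Or.inr hx0
    · exact Or.inl ⟨hx.1, hx0, by rw [dotProduct_comm]; exact hx.2⟩
  have h3 : hypDev n A z = #{x ∈ vecs n A | x ≠ 0 ∧ z ⬝ᵥ x = 0} -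
      #{x ∈ vecs n A | x ≠ 0} / (Fintype.card F : ℝ) := by
    simp only [hypDev, bal, Finset.sum_sub_distrib, Finset.sum_const, nsmul_eq_mul,
      ← Finset.filter_filter, Finset.card_filter _ (Finset.filter _ _)]
    push_cast
    ring
  have h4 : (#{x ∈ vecs n A | x ≠ 0} : ℝ) / (Fintype.card F : ℝ) ≤
      (#A : ℝ) ^ n / (Fintype.card F : ℝ) := by
    gcongr
    have : #{x ∈ vecs n A | x ≠ 0} ≤ #A ^ n := by
      rw [← card_vecs]; exact Finset.card_filter_le _ _
    exact_mod_cast this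
  have h5 : (hyp n A z : ℝ) ≤ #{x ∈ vecs n A | x ≠ 0 ∧ z ⬝ᵥ x = 0} + 1 := by exact_mod_cast h2
  linarith

/-- Either `hyp` is at most four times its expected value, or it is at most twice its deviation;
in the second case all but two of the factors are bounded trivially by `#A ^ (p + 1)`. -/
lemma hyp_pow_le (p : ℕ) (A : Finset F) (hq : (Fintype.card F : ℝ) ≤ (#A : ℝ) ^ (p + 2))
    {z : Fin (p + 2) → F} (hz : z ≠ 0) :
    (hyp (p + 2) A z : ℝ) ^ (2 * p + 2) ≤
      (4 * ((#A : ℝ) ^ (p + 2) / (Fintype.card F : ℝ))) ^ (2 * p + 2) +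
        4 * (#A : ℝ) ^ (2 * p * (p + 1)) * hypDev (p + 2) A z ^ 2 := by
  have hq0 := card_pos_real (F := F)
  have h1 := hyp_le _ A hq z
  have h2 : (hyp (p + 2) A z : ℝ) ≤ (#A : ℝ) ^ (p + 1) := by
    exact_mod_cast card_dot_le A hz 0
  have h0 : (0 : ℝ) ≤ hyp (p + 2) A z := by positivity
  rcases le_total (hyp (p + 2) A z : ℝ) (4 * ((#A : ℝ) ^ (p + 2) / (Fintype.card F : ℝ)))
    with h | h
  · exact (pow_le_pow_left₀ h0 h _).trans (le_add_of_nonneg_right (by positivity))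
  · have h3 : (hyp (p + 2) A z : ℝ) ≤ 2 * hypDev (p + 2) A z := by linarith
    calc (hyp (p + 2) A z : ℝ) ^ (2 * p + 2)
        = (hyp (p + 2) A z : ℝ) ^ (2 * p) * (hyp (p + 2) A z : ℝ) ^ 2 := pow_add _ _ _
      _ ≤ ((#A : ℝ) ^ (p + 1)) ^ (2 * p) * (2 * hypDev (p + 2) A z) ^ 2 := by gcongr
      _ = 4 * (#A : ℝ) ^ (2 * p * (p + 1)) * hypDev (p + 2) A z ^ 2 := by
          rw [← pow_mul]; ring
      _ ≤ _ := le_add_of_nonneg_left (by positivity)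

lemma sum_hyp_pow_le (p : ℕ) (A : Finset F)
    (hq : (Fintype.card F : ℝ) ≤ (#A : ℝ) ^ (p + 2)) :
    ∑ z ∈ univ.erase (0 : Fin (p + 2) → F), (hyp (p + 2) A z : ℝ) ^ (2 * p + 2) ≤
      (Fintype.card F : ℝ) ^ (p + 2) *
          (4 * ((#A : ℝ) ^ (p + 2) / (Fintype.card F : ℝ))) ^ (2 * p + 2) +
        4 * (#A : ℝ) ^ (2 * p * (p + 1)) *
          ((Fintype.card F : ℝ) ^ (p + 1) * (#A : ℝ) ^ (p + 3)) := by
  have hq0 := card_pos_real (F := F)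
  calc _ ≤ ∑ z ∈ univ.erase (0 : Fin (p + 2) → F),
        ((4 * ((#A : ℝ) ^ (p + 2) / (Fintype.card F : ℝ))) ^ (2 * p + 2) +
        4 * (#A : ℝ) ^ (2 * p * (p + 1)) * hypDev (p + 2) A z ^ 2) :=
        Finset.sum_le_sum fun z hz => hyp_pow_le p A hq (Finset.ne_of_mem_erase hz)
    _ ≤ ∑ z : Fin (p + 2) → F,
        ((4 * ((#A : ℝ) ^ (p + 2) / (Fintype.card F : ℝ))) ^ (2 * p + 2) +
        4 * (#A : ℝ) ^ (2 * p * (p + 1)) * hypDev (p + 2) A z ^ 2) :=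
        Finset.sum_le_sum_of_subset_of_nonneg (Finset.subset_univ _) fun _ _ _ => by positivity
    _ = (Fintype.card F : ℝ) ^ (p + 2) *
          (4 * ((#A : ℝ) ^ (p + 2) / (Fintype.card F : ℝ))) ^ (2 * p + 2) +
        4 * (#A : ℝ) ^ (2 * p * (p + 1)) * ∑ z, hypDev (p + 2) A z ^ 2 := by
        rw [Finset.sum_add_distrib, ← Finset.mul_sum]
        simp
    _ ≤ _ := by
        gcongr
        exact sum_hypDev_sq_le (p + 1) A

lemma card_mats_orth (m n : ℕ) (A : Finset F) (z : Fin n → F) :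
    #{M ∈ mats m n A | ∀ i, M i ⬝ᵥ z = 0} = hyp n A z ^ m := by
  have h : #(Fintype.piFinset fun _ : Fin m => {x ∈ vecs n A | x ⬝ᵥ z = 0}) = hyp n A z ^ m := by
    simp [hyp]
  rw [← h]
  refine Finset.card_nbij' (fun M i => M i) (fun M => Matrix.of M) ?_ ?_ (fun _ _ => rfl) (fun _ _ => rfl)
  · intro M hM
    simp only [coe_filter, Set.mem_ofPred_eq, mem_mats] at hM
    rw [mem_coe, Fintype.mem_piFinset]
    exact fun i => Finset.mem_filter.mpr ⟨mem_vecs.mpr (hM.1 i), hM.2 i⟩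
  · intro M hM
    rw [mem_coe, Fintype.mem_piFinset] at hM
    rw [mem_coe, Finset.mem_filter, mem_mats]
    exact ⟨fun i => mem_vecs.mp (Finset.mem_filter.mp (hM i)).1,
      fun i => (Finset.mem_filter.mp (hM i)).2⟩

open Classical in
/-- If `cof M` and `cof M'` are parallel, all rows of `M` and `M'` are orthogonal to each of the
`q - 1` nonzero multiples `z` of `cof M`. -/
lemma card_par_cof_le (m : ℕ) (A : Finset F) :
    (Fintype.card F - 1) * #{p ∈ good m A ×ˢ good m A | Par (cof p.1) (cof p.2)} ≤
      ∑ z ∈ univ.erase (0 : Fin (m + 1) → F), hyp (m + 1) A z ^ (2 * m) := by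
  set P := {p ∈ good m A ×ˢ good m A | Par (cof p.1) (cof p.2)} with hP
  let R : (Fin (m + 1) → F) → Matrix (Fin m) (Fin (m + 1)) F × Matrix (Fin m) (Fin (m + 1)) F →
    Prop := fun z p => (∀ i, p.1 i ⬝ᵥ z = 0) ∧ ∀ i, p.2 i ⬝ᵥ z = 0
  have h1 : ∀ z : Fin (m + 1) → F, #{p ∈ P | R z p} ≤ hyp (m + 1) A z ^ (2 * m) := by
    intro z
    rw [two_mul, pow_add, ← card_mats_orth, ← Finset.card_product]
    refine Finset.card_le_card fun p hp => ?_
    simp only [hP, good, mem_filter, mem_product] at hp ⊢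
    exact ⟨⟨hp.1.1.1.1, hp.2.1⟩, ⟨hp.1.1.2.1, hp.2.2⟩⟩
  have h2 : ∀ p ∈ P, Fintype.card F - 1 ≤ #{z ∈ univ.erase (0 : Fin (m + 1) → F) | R z p} := by
    intro p hp
    simp only [hP, good, mem_filter, mem_product] at hp
    obtain ⟨⟨⟨-, hc⟩, -⟩, c, hc0, hpar⟩ := hp
    rw [← Finset.card_univ, ← Finset.card_erase_of_mem (Finset.mem_univ (0 : F))]
    refine Finset.card_le_card_of_injOn (fun s => s • cof p.1) ?_ ?_
    · intro s hs
      simp only [coe_erase, coe_univ, Set.mem_sdiff, Set.mem_univ, Set.mem_singleton_iff,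
        true_and] at hs
      simp only [coe_filter, Set.mem_ofPred_eq, mem_erase, mem_univ, and_true]
      refine ⟨smul_ne_zero hs hc, fun i => ?_, fun i => ?_⟩
      · rw [dotProduct_smul, row_dot_cof, smul_zero]
      · have : cof p.1 = c⁻¹ • cof p.2 := by rw [hpar, inv_smul_smul₀ hc0]
        rw [this, dotProduct_smul, dotProduct_smul, row_dot_cof, smul_zero, smul_zero]
    · intro s _ s' _ h
      exact smul_left_injective F hc h
  calc (Fintype.card F - 1) * #P = ∑ p ∈ P, (Fintype.card F - 1) := by
        rw [Finset.sum_const, smul_eq_mul, mul_comm]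
    _ ≤ ∑ p ∈ P, #{z ∈ univ.erase (0 : Fin (m + 1) → F) | R z p} := Finset.sum_le_sum h2
    _ = ∑ z ∈ univ.erase (0 : Fin (m + 1) → F), #{p ∈ P | R z p} := by
        simp only [Finset.card_filter]
        exact Finset.sum_comm
    _ ≤ _ := Finset.sum_le_sum fun z _ => h1 z

/-! ### Energy of the determinant -/

lemma card_good_le (m : ℕ) (A : Finset F) :
    (#A : ℝ) ^ (m + 1) * #(good m A) ≤ (#A : ℝ) ^ ((m + 1) ^ 2) := by
  have h : #A ^ (m + 1) * #(good m A) ≤ #A ^ ((m + 1) ^ 2) := by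
    calc _ ≤ #A ^ (m + 1) * #(mats m (m + 1) A) := by
          gcongr; exact Finset.filter_subset _ _
      _ = _ := by rw [card_mats]; ring
  exact_mod_cast h

open Classical in
/-- The energy is its expected value plus the variance, and the variance is bounded by pairs with
parallel cofactor vectors. -/
lemma sum_detCount_sq_le (m : ℕ) (A : Finset F) :
    (Fintype.card F : ℝ) * ∑ t ∈ univ.erase (0 : F), (detCount (m + 1) A t : ℝ) ^ 2 ≤
      (#A : ℝ) ^ (2 * (m + 1) ^ 2) + (#A : ℝ) ^ (m + 1) * (Fintype.card F : ℝ) ^ (m + 1) *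
        #{p ∈ good m A ×ˢ good m A | Par (cof p.1) (cof p.2)} := by
  have hq0 := card_pos_real (F := F)
  set q : ℝ := (Fintype.card F : ℝ) with hq
  set K : ℝ := (#A : ℝ) ^ (m + 1) * #(good m A) with hK
  set D : F → ℝ := fun t => ∑ x ∈ vecs (m + 1) A, ∑ M ∈ good m A, bal t (x ⬝ᵥ cof M) with hD
  have hD0 : ∑ t, D t = 0 := by
    simp only [hD]
    rw [Finset.sum_comm]
    refine Finset.sum_eq_zero fun x _ => ?_
    rw [Finset.sum_comm]
    exact Finset.sum_eq_zero fun i _ => sum_bal_left _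
  have hDsq := sum_discrepancy_sq_le (vecs (m + 1) A) (good m A) cof
    (fun M hM => (Finset.mem_filter.mp hM).2)
  rw [card_vecs] at hDsq
  push_cast at hDsq
  have h1 : ∑ t ∈ univ.erase (0 : F), (detCount (m + 1) A t : ℝ) ^ 2 ≤
      ∑ t, D t ^ 2 + K ^ 2 / q := by
    calc _ = ∑ t ∈ univ.erase (0 : F), (D t + K / q) ^ 2 := by
          refine Finset.sum_congr rfl fun t ht => ?_
          simp only [hD, ← detCount_sub_eq m A (Finset.ne_of_mem_erase ht)]
          congr 1
          ring
      _ ≤ ∑ t, (D t + K / q) ^ 2 :=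
          Finset.sum_le_sum_of_subset_of_nonneg (Finset.subset_univ _) fun _ _ _ => sq_nonneg _
      _ = ∑ t, D t ^ 2 + 2 * (K / q) * ∑ t, D t + q * (K / q) ^ 2 := by
          rw [Finset.mul_sum, ← Finset.sum_add_distrib, hq, ← nsmul_eq_mul, ← Finset.card_univ,
            ← Finset.sum_const, ← Finset.sum_add_distrib]
          exact Finset.sum_congr rfl fun t _ => by ring
      _ = _ := by rw [hD0]; field_simp; ring
  have hK2 : K ^ 2 ≤ (#A : ℝ) ^ (2 * (m + 1) ^ 2) := by
    calc K ^ 2 ≤ ((#A : ℝ) ^ ((m + 1) ^ 2)) ^ 2 := by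
          gcongr; exact card_good_le m A
      _ = _ := by ring
  calc _ ≤ q * (∑ t, D t ^ 2 + K ^ 2 / q) := by gcongr
    _ = K ^ 2 + q * ∑ t, D t ^ 2 := by field_simp; ring
    _ ≤ (#A : ℝ) ^ (2 * (m + 1) ^ 2) + q * ((#A : ℝ) ^ (m + 1) * (q ^ m *
        #{p ∈ good m A ×ˢ good m A | Par (cof p.1) (cof p.2)})) := by gcongr
    _ = _ := by ring

/-- The energy bound for `m = p + 2`. -/
lemma energy_le (p : ℕ) (A : Finset F) (hq : (Fintype.card F : ℝ) ≤ (#A : ℝ) ^ (p + 2)) :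
    (Fintype.card F : ℝ) * ∑ t ∈ univ.erase (0 : F), (detCount (p + 2) A t : ℝ) ^ 2 ≤
      (9 + 2 * 4 ^ (2 * p + 2)) * ((#A : ℝ) ^ (2 * (p + 2) ^ 2) +
        (Fintype.card F : ℝ) ^ (2 * p + 2) * (#A : ℝ) ^ (2 * p ^ 2 + 4 * p + 5)) := by
  classical
  have hq0 := card_pos_real (F := F)
  have h1 := sum_detCount_sq_le (p + 1) A
  have h2 := card_par_cof_le (p + 1) A
  have h3 := sum_hyp_pow_le p A hq
  have hq2 : 2 ≤ Fintype.card F := Fintype.one_lt_card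
  have h2' : ((Fintype.card F : ℝ) - 1) *
      #{p ∈ good (p + 1) A ×ˢ good (p + 1) A | Par (cof p.1) (cof p.2)} ≤
      ∑ z ∈ univ.erase (0 : Fin (p + 2) → F), (hyp (p + 2) A z : ℝ) ^ (2 * p + 2) := by
    have : (Fintype.card F : ℝ) - 1 = ((Fintype.card F - 1 : ℕ) : ℝ) := by
      rw [Nat.cast_sub (by omega)]; simp
    rw [this]
    exact_mod_cast h2
  set G : ℕ := #{p ∈ good (p + 1) A ×ˢ good (p + 1) A | Par (cof p.1) (cof p.2)}
  set q : ℝ := (Fintype.card F : ℝ) with hqdef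
  set a : ℝ := (#A : ℝ)
  have ha : 0 ≤ a := by positivity
  have hq2' : (2 : ℝ) ≤ q := by rw [hqdef]; exact_mod_cast hq2
  have h4 : q * G ≤ 2 * (q ^ (p + 2) * (4 * (a ^ (p + 2) / q)) ^ (2 * p + 2) +
      4 * a ^ (2 * p * (p + 1)) * (q ^ (p + 1) * a ^ (p + 3))) := by
    have hG : (0 : ℝ) ≤ G := by positivity
    nlinarith [h2'.trans h3]
  have h5 : q ^ (p + 1) * (q ^ (p + 2) * (4 * (a ^ (p + 2) / q)) ^ (2 * p + 2)) =
      4 ^ (2 * p + 2) * q * a ^ ((p + 2) * (2 * p + 2)) := by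
    rw [mul_pow, div_pow, ← pow_mul]
    field_simp
    ring
  have h6 : a ^ (p + 2) * q ^ (p + 2) * G ≤
      2 * (4 ^ (2 * p + 2) * q * a ^ ((p + 2) * (2 * p + 3))) +
        8 * (q ^ (2 * p + 2) * a ^ (2 * p ^ 2 + 4 * p + 5)) := by
    calc a ^ (p + 2) * q ^ (p + 2) * G = a ^ (p + 2) * q ^ (p + 1) * (q * G) := by ring
      _ ≤ a ^ (p + 2) * q ^ (p + 1) *
          (2 * (q ^ (p + 2) * (4 * (a ^ (p + 2) / q)) ^ (2 * p + 2) +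
            4 * a ^ (2 * p * (p + 1)) * (q ^ (p + 1) * a ^ (p + 3)))) := by gcongr
      _ = 2 * a ^ (p + 2) *
          (q ^ (p + 1) * (q ^ (p + 2) * (4 * (a ^ (p + 2) / q)) ^ (2 * p + 2))) +
            8 * (q ^ (2 * p + 2) * a ^ (2 * p ^ 2 + 4 * p + 5)) := by ring
      _ = _ := by rw [h5]; ring
  have h7 : q * a ^ ((p + 2) * (2 * p + 3)) ≤ a ^ (2 * (p + 2) ^ 2) := by
    calc _ ≤ a ^ (p + 2) * a ^ ((p + 2) * (2 * p + 3)) := by gcongr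
      _ = _ := by ring
  have h8 : (0 : ℝ) ≤ q ^ (2 * p + 2) * a ^ (2 * p ^ 2 + 4 * p + 5) := by positivity
  have h9 : (0 : ℝ) ≤ a ^ (2 * (p + 2) ^ 2) := by positivity
  have h10 : (0 : ℝ) ≤ 4 ^ (2 * p + 2) := by positivity
  refine h1.trans ?_
  refine (add_le_add_right h6 _).trans ?_
  nlinarith [mul_le_mul_of_nonneg_left h7 h10, mul_nonneg h10 h8]

/-- The squared error for `(m + 1) × (m + 1)` matrices is bounded by the energy of `m × m`
matrices. -/
lemma detCount_sub_sq_le (m : ℕ) (A : Finset F) {t : F} (ht : t ≠ 0) :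
    ((detCount (m + 1) A t : ℝ) -
      (#A : ℝ) ^ (m + 1) * #(good m A) / (Fintype.card F : ℝ)) ^ 2 ≤
      (m + 1) * (#A : ℝ) ^ (2 * m + 1) * (Fintype.card F : ℝ) ^ m *
        ∑ t ∈ univ.erase (0 : F), (detCount m A t : ℝ) ^ 2 := by
  rw [detCount_sub_eq m A ht]
  have h1 := discrepancy_sq_le (vecs (m + 1) A) (good m A) cof
    (fun M hM => (Finset.mem_filter.mp hM).2) ht
  have h2 : (#{p ∈ good m A ×ˢ good m A | cof p.1 = cof p.2} : ℝ) ≤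
      (m + 1) * ((#A : ℝ) ^ m * ∑ t ∈ univ.erase (0 : F), (detCount m A t : ℝ) ^ 2) := by
    exact_mod_cast card_cof_eq_le m A
  rw [card_vecs] at h1
  push_cast at h1
  refine h1.trans ?_
  calc _ ≤ (#A : ℝ) ^ (m + 1) * ((Fintype.card F : ℝ) ^ m * ((m + 1) * ((#A : ℝ) ^ m *
        ∑ t ∈ univ.erase (0 : F), (detCount m A t : ℝ) ^ 2))) := by gcongr
    _ = _ := by ring

lemma energy_one_le (A : Finset F) :
    ∑ t ∈ univ.erase (0 : F), (detCount 1 A t : ℝ) ^ 2 ≤ #A := by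
  have h1 : ∀ t : F, detCount 1 A t ≤ 1 := by
    intro t
    unfold detCount
    rw [Finset.card_le_one]
    intro U hU V hV
    simp only [mem_filter, det_unique] at hU hV
    ext i j
    rw [Subsingleton.elim i default, Subsingleton.elim j default, hU.2, hV.2]
  have h2 : ∑ t ∈ univ.erase (0 : F), detCount 1 A t ≤ #A := by
    calc _ ≤ ∑ t, detCount 1 A t := Finset.sum_le_sum_of_subset (Finset.subset_univ _)
      _ = #(mats 1 1 A) := (Finset.card_eq_sum_card_fiberwise (by simp)).symm
      _ = #A := by rw [card_mats]; simp
  calc _ ≤ ∑ t ∈ univ.erase (0 : F), (detCount 1 A t : ℝ) := by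
        refine Finset.sum_le_sum fun t _ => ?_
        have : (detCount 1 A t : ℝ) ≤ 1 := by exact_mod_cast h1 t
        nlinarith [(Nat.cast_nonneg (detCount 1 A t) : (0 : ℝ) ≤ _)]
    _ ≤ _ := by exact_mod_cast h2

/-! ### Choice of the constant -/

lemma mul_pow_le_of_rpow {a q C β : ℝ} (hC : 1 ≤ C) (hq : 1 ≤ q) (h : C * q ^ β ≤ a) {k l : ℕ}
    (hk : k ≠ 0) (hkl : (l : ℝ) ≤ β * k) : C * q ^ l ≤ a ^ k := by
  have hq0 : 0 ≤ q := by linarith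
  calc C * q ^ l ≤ C ^ k * q ^ (β * k) := by
        refine mul_le_mul (le_self_pow₀ hC hk) ?_ (by positivity) (by positivity)
        rw [← Real.rpow_natCast]
        exact Real.rpow_le_rpow_of_exponent_le hq hkl
    _ = (C * q ^ β) ^ k := by rw [mul_pow, Real.rpow_mul hq0, Real.rpow_natCast]
    _ ≤ a ^ k := pow_le_pow_left₀ (by positivity) h k

/-- A bound for the squared distance of `N` from `K / q`, together with `K` being close to `B`,
yields the relative error `ε` for `N` against `B / q`. -/
lemma abs_sub_le_of_sq {N K B q ε R a m : ℝ} (hq : 0 < q) (hε : 0 < ε) (hB : 0 ≤ B) (hKB : K ≤ B)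
    (ha : 0 < a) (hN : (N - K / q) ^ 2 ≤ R) (hR : q ^ 2 * R ≤ (ε / 2 * B) ^ 2)
    (hK : a * B ≤ a * K + m * B) (hm : 2 * m ≤ ε * a) :
    |N - B / q| ≤ ε * B / q := by
  have h1 : |N - K / q| ≤ ε / 2 * B / q := by
    refine abs_le_of_sq_le_sq ?_ (by positivity)
    rw [div_pow, le_div_iff₀ (by positivity)]
    nlinarith [mul_le_mul_of_nonneg_left hN (sq_nonneg q)]
  have h2 : B - K ≤ ε / 2 * B := by
    refine le_of_mul_le_mul_left ?_ ha
    nlinarith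
  have h3 : |K / q - B / q| ≤ ε / 2 * B / q := by
    rw [← sub_div, abs_div, abs_of_pos hq, abs_sub_comm, abs_of_nonneg (by linarith)]
    gcongr
  calc |N - B / q| ≤ |N - K / q| + |K / q - B / q| := abs_sub_le _ _ _
    _ ≤ ε / 2 * B / q + ε / 2 * B / q := add_le_add h1 h3
    _ = ε * B / q := by ring

/-- An energy bound `E / q` for `m × m` matrices that satisfies the numerical condition `hR` gives
the asymptotic count of `(m + 1) × (m + 1)` matrices. -/
lemma abs_matCount_sub_le (m : ℕ) (A : Finset F)
    {t : F} (ht : t ≠ 0) {ε E : ℝ} (hε : 0 < ε) (ha : 0 < (#A : ℝ))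
    (hE : (Fintype.card F : ℝ) * ∑ t ∈ univ.erase (0 : F), (detCount m A t : ℝ) ^ 2 ≤ E)
    (hR : (m + 1) * (#A : ℝ) ^ (2 * m + 1) * (Fintype.card F : ℝ) ^ (m + 1) * E ≤
      ε ^ 2 / 4 * (#A : ℝ) ^ (2 * (m + 1) ^ 2)) (hm : 2 * m ≤ ε * (#A : ℝ)) :
    |(matCount F (m + 1) A t : ℝ) - (#A : ℝ) ^ ((m + 1) ^ 2) / (Fintype.card F : ℝ)| ≤
      ε * (#A : ℝ) ^ ((m + 1) ^ 2) / (Fintype.card F : ℝ) := by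
  have hq0 := card_pos_real (F := F)
  rw [matCount_eq]
  refine abs_sub_le_of_sq (m := (m : ℝ)) hq0 hε (by positivity) (card_good_le m A) ha
    (detCount_sub_sq_le m A ht) ?_ ?_ hm
  · calc _ = (m + 1) * (#A : ℝ) ^ (2 * m + 1) * (Fintype.card F : ℝ) ^ (m + 1) *
          ((Fintype.card F : ℝ) *
            ∑ t ∈ univ.erase (0 : F), (detCount m A t : ℝ) ^ 2) := by ring
      _ ≤ (m + 1) * (#A : ℝ) ^ (2 * m + 1) * (Fintype.card F : ℝ) ^ (m + 1) * E := by gcongr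
      _ ≤ _ := hR
      _ = _ := by ring
  · have h := card_mats_le_good m A
    rw [card_mats] at h
    have h' : (#A : ℝ) * (#A : ℝ) ^ (m * (m + 1)) ≤
        #A * #(good m A) + m * (#A : ℝ) ^ (m * (m + 1)) := by exact_mod_cast h
    calc _ = (#A : ℝ) ^ (m + 1) * ((#A : ℝ) * (#A : ℝ) ^ (m * (m + 1))) := by ring
      _ ≤ (#A : ℝ) ^ (m + 1) * (#A * #(good m A) + m * (#A : ℝ) ^ (m * (m + 1))) := by gcongr
      _ = _ := by ring

end RestrictedDet

open RestrictedDet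

theorem stmt_0 (d : ℕ) (hd : 2 ≤ d) (ε : ℝ) (hε : 0 < ε) :
    ∃ C : ℝ, 0 < C ∧
      ∀ (F : Type) [Field F] [Fintype F], Odd (Fintype.card F) →
        ∀ A : Finset F,
          C * ((Fintype.card F : ℝ) ^ ((d : ℝ) / (2 * (d : ℝ) - 1)) +
              (Fintype.card F : ℝ) ^
                (((d : ℝ) ^ 2 - (d : ℝ) + 4) / (2 * ((d : ℝ) ^ 2 - (d : ℝ) + 2)))) ≤
            (A.card : ℝ) →
          ∀ t : F, t ≠ 0 →
            |(matCount F d A t : ℝ) - (A.card : ℝ) ^ (d ^ 2) / (Fintype.card F : ℝ)| ≤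
              ε * (A.card : ℝ) ^ (d ^ 2) / (Fintype.card F : ℝ) := by
  set c : ℝ := 9 + 2 * 4 ^ (2 * d) with hc
  have hd0 : (2 : ℝ) ≤ d := by exact_mod_cast hd
  have hc0 : 0 < c := by positivity
  set C : ℝ := 1 + 2 * d / ε + 8 * d * c / ε ^ 2 with hCdef
  have hC1 : 1 ≤ C := by
    have : 0 ≤ 2 * d / ε + 8 * d * c / ε ^ 2 := by positivity
    linarith
  have hCm : 2 * d ≤ ε * C := by
    have h : 2 * d / ε ≤ C := by
      have : 0 ≤ 8 * d * c / ε ^ 2 := by positivity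
      linarith
    rwa [div_le_iff₀ hε, mul_comm C] at h
  have hCc : 2 * d * c ≤ ε ^ 2 / 4 * C := by
    have h : 8 * d * c / ε ^ 2 ≤ C := by
      have : 0 ≤ 2 * d / ε := by positivity
      linarith
    rw [div_le_iff₀ (by positivity)] at h
    linarith
  refine ⟨C, by linarith, fun F _ _ _ A hA t ht => ?_⟩
  classical
  have hq1 : (1 : ℝ) ≤ Fintype.card F := by exact_mod_cast Fintype.card_pos
  set q : ℝ := (Fintype.card F : ℝ) with hq
  set a : ℝ := (A.card : ℝ) with ha
  have hC0 : 0 ≤ C := by linarith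
  have hA1 : C * q ^ ((d : ℝ) / (2 * d - 1)) ≤ a :=
    le_trans (mul_le_mul_of_nonneg_left (le_add_of_nonneg_right (by positivity)) hC0) hA
  have hA2 : C * q ^ (((d : ℝ) ^ 2 - d + 4) / (2 * ((d : ℝ) ^ 2 - d + 2))) ≤ a :=
    le_trans (mul_le_mul_of_nonneg_left (le_add_of_nonneg_left (by positivity)) hC0) hA
  have hβ : 0 ≤ (d : ℝ) / (2 * d - 1) := div_nonneg (by linarith) (by linarith)
  have haC : C ≤ a := by
    have := mul_pow_le_of_rpow hC1 hq1 hA1 (k := 1) (l := 0) one_ne_zero (by simpa using hβ)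
    simpa using this
  have ha0 : 0 < a := by linarith
  have hεa : 2 * d ≤ ε * a := hCm.trans (by gcongr)
  obtain rfl | hd3 := hd.eq_or_lt
  · -- `d = 2`: the energy of `1 × 1` determinants is `#A`.
    have h4 : C * q ^ 3 ≤ a ^ 4 :=
      mul_pow_le_of_rpow hC1 hq1 hA2 (by norm_num) (by norm_num)
    refine abs_matCount_sub_le 1 A ht (E := q * a) hε ha0 ?_ ?_ (by push_cast at hεa ⊢; linarith)
    · exact mul_le_mul_of_nonneg_left (energy_one_le A) (by linarith)
    · have hc1 : 1 ≤ c := by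
        have : (0 : ℝ) ≤ 2 * 4 ^ (2 * 2) := by positivity
        linarith
      have h2 : (2 : ℝ) ≤ ε ^ 2 / 4 * C := by push_cast at hCc; linarith
      calc _ = 2 * (q ^ 3 * a ^ 4) := by push_cast; ring
        _ ≤ ε ^ 2 / 4 * C * (q ^ 3 * a ^ 4) := by gcongr
        _ = ε ^ 2 / 4 * (a ^ 4 * (C * q ^ 3)) := by ring
        _ ≤ ε ^ 2 / 4 * (a ^ 4 * a ^ 4) := by gcongr
        _ = _ := by ring
  · obtain ⟨p, rfl⟩ : ∃ p, d = p + 2 + 1 := ⟨d - 3, by omega⟩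
    have hp0 : (0 : ℝ) ≤ p := by positivity
    have hden : (0 : ℝ) < 2 * ((p + 2 + 1 : ℕ) : ℝ) - 1 := by push_cast; linarith
    have h1 : C * q ^ (p + 3) ≤ a ^ (2 * p + 5) := by
      refine mul_pow_le_of_rpow hC1 hq1 hA1 (by omega) ?_
      rw [div_mul_eq_mul_div, le_div_iff₀ hden]
      push_cast
      exact le_of_eq (by ring)
    have h2 : C * q ^ (3 * p + 5) ≤ a ^ (6 * p + 8) := by
      rcases Nat.eq_zero_or_pos p with rfl | hp
      · -- `d = 3` is the only case above `2` in which the second exponent, `5 / 8`, is needed.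
        exact mul_pow_le_of_rpow hC1 hq1 hA2 (by norm_num) (by norm_num)
      · refine mul_pow_le_of_rpow hC1 hq1 hA1 (by omega) ?_
        have hp1 : (1 : ℝ) ≤ p := by exact_mod_cast hp
        rw [div_mul_eq_mul_div, le_div_iff₀ hden]
        push_cast
        nlinarith
    have h3 : q ≤ a ^ (p + 2) := by
      have h := mul_pow_le_of_rpow hC1 hq1 hA1 (k := p + 2) (l := 1) (by omega) (by
        rw [div_mul_eq_mul_div, le_div_iff₀ hden]
        push_cast
        nlinarith)
      rw [pow_one] at h
      nlinarith
    refine abs_matCount_sub_le (p + 2) A ht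
      (E := c * (a ^ (2 * (p + 2) ^ 2) + q ^ (2 * p + 2) * a ^ (2 * p ^ 2 + 4 * p + 5)))
      hε ha0 ?_ ?_ (by push_cast at hεa ⊢; linarith)
    · refine (energy_le p A h3).trans ?_
      have hcp : (9 : ℝ) + 2 * 4 ^ (2 * p + 2) ≤ c := by
        rw [hc]
        gcongr
        · norm_num
        · omega
      gcongr
    · push_cast at hCc ⊢
      calc _ = ((p : ℝ) + 2 + 1) * c * (q ^ (p + 3) * a ^ (2 * p ^ 2 + 10 * p + 13) +
            q ^ (3 * p + 5) * a ^ (2 * p ^ 2 + 6 * p + 10)) := by ring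
        _ ≤ ε ^ 2 / 4 * C / 2 * (q ^ (p + 3) * a ^ (2 * p ^ 2 + 10 * p + 13) +
            q ^ (3 * p + 5) * a ^ (2 * p ^ 2 + 6 * p + 10)) := by
            gcongr
            linarith
        _ = ε ^ 2 / 8 * ((C * q ^ (p + 3)) * a ^ (2 * p ^ 2 + 10 * p + 13) +
            (C * q ^ (3 * p + 5)) * a ^ (2 * p ^ 2 + 6 * p + 10)) := by ring
        _ ≤ ε ^ 2 / 8 * (a ^ (2 * p + 5) * a ^ (2 * p ^ 2 + 10 * p + 13) +
            a ^ (6 * p + 8) * a ^ (2 * p ^ 2 + 6 * p + 10)) := by gcongr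
        _ = _ := by ring
end

section
/- For every integer d ≥ 2, every subset A ⊆ F_q, and every index i with 1 ≤ i ≤ d, one has Σ_{y_i ∈ F_q, y_i ≠ 0} Σ_{y_{i+1}, …, y_d ∈ F_q} g(0, …, 0, y_i, y_{i+1}, …, y_d)² ≤ |A|^{d−i} · Σ_{l ∈ F_q, l ≠ 0} N_{d−1}(A;l)². -/
/-- For a `(d-1) × d` matrix `M` (here `d = e + 1`), `vmat M` is the vector whose `i`-th
coordinate is `(-1)^(i+1)` times the determinant of the minor of `M` obtained by deleting
the `i`-th column (indices `0`-based, corresponding to `(-1)^i det M_i` with `1`-based `i`). -/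
def vmat {F : Type} [CommRing F] {e : ℕ} (M : Matrix (Fin e) (Fin (e + 1)) F) :
    Fin (e + 1) → F :=
  fun i => (-1 : F) ^ ((i : ℕ) + 1) * (M.submatrix id i.succAbove).det

/-- `gcount F e A x` is the number of `(d-1) × d` matrices `M` (with `d = e + 1`) over `F`
with all entries in `A` such that `vmat M = x`. -/
noncomputable def gcount (F : Type) [CommRing F] [Fintype F] (e : ℕ) (A : Finset F)
    (x : Fin (e + 1) → F) : ℕ :=
  Nat.card {M : Matrix (Fin e) (Fin (e + 1)) F // (∀ i j, M i j ∈ A) ∧ vmat M = x}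

/-- Expand along row zero the determinant of `M` with its row `r` repeated on top. -/
lemma mulVec_vmat {F : Type} [CommRing F] {e : ℕ} (M : Matrix (Fin e) (Fin (e + 1)) F)
    (r : Fin e) : ∑ j, M r j * vmat M j = 0 := by
  let N : Matrix (Fin (e + 1)) (Fin (e + 1)) F := Matrix.of (Matrix.vecCons (M r) M)
  have h0 : N.det = 0 := by
    refine Matrix.det_zero_of_row_eq (i := 0) (j := r.succ) (Fin.succ_ne_zero r).symm ?_
    rfl
  rw [Matrix.det_succ_row_zero] at h0
  have h1 : ∀ j : Fin (e + 1), N.submatrix Fin.succ j.succAbove = M.submatrix id j.succAbove :=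
    fun _ => rfl
  have h2 : ∑ j, M r j * vmat M j
      = -∑ j : Fin (e + 1), (-1) ^ (j : ℕ) * N 0 j * (N.submatrix Fin.succ j.succAbove).det := by
    rw [← Finset.sum_neg_distrib]
    refine Finset.sum_congr rfl fun j _ => ?_
    rw [h1]
    have h3 : N 0 j = M r j := rfl
    rw [h3]
    simp only [vmat]
    ring
  rw [h2, h0, neg_zero]

lemma col_eq_of_vmat {F : Type} [Field F] {e : ℕ} (M : Matrix (Fin e) (Fin (e + 1)) F)
    (i : Fin (e + 1)) (hlt : ∀ j, j < i → vmat M j = 0) (hi : vmat M i ≠ 0) (r : Fin e) :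
    M r i = ∑ j : {j : Fin (e + 1) // i < j}, M r j * (-(vmat M j) / vmat M i) := by
  have h := mulVec_vmat M r
  have hs : ∑ j, M r j * vmat M j
      = M r i * vmat M i + ∑ j : {j : Fin (e + 1) // i < j}, M r j * vmat M j := by
    rw [← Finset.add_sum_erase _ _ (Finset.mem_univ i)]
    congr 1
    rw [← Finset.sum_subtype ((Finset.univ.erase i).filter (fun j => i < j))
      (p := fun j => i < j) (f := fun j => M r j * vmat M j)]
    · symm
      refine Finset.sum_filter_of_ne fun j hj hne => ?_
      have hji : j ≠ i := Finset.ne_of_mem_erase hj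
      by_contra hcon
      exact hne (by rw [hlt j (lt_of_le_of_ne (not_lt.mp hcon) hji), mul_zero])
    · intro j
      simp only [Finset.mem_filter, Finset.mem_erase, Finset.mem_univ, and_true]
      exact ⟨fun h => h.2, fun h => ⟨h.ne', h⟩⟩
  rw [hs] at h
  have h2 : ∑ j : {j : Fin (e + 1) // i < j}, M r j * (-(vmat M j) / vmat M i)
      = -(∑ j : {j : Fin (e + 1) // i < j}, M r j * vmat M j) / vmat M i := by
    rw [← Finset.sum_neg_distrib, Finset.sum_div]
    refine Finset.sum_congr rfl fun j _ => ?_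
    ring
  rw [h2, eq_div_iff hi]
  linear_combination h

/-- Some `k` of the rows of a matrix with column index `J`, with `k ≤ |J|`, span all of its rows;
the corresponding coordinates determine every vector in the column space. -/
lemma exists_rows_determine {F : Type} [Field F] {I J : Type} [Fintype I] [Fintype J]
    (w : I → J → F) :
    ∃ (κ : Type) (_ : Fintype κ) (a : κ → I), Fintype.card κ ≤ Fintype.card J ∧
      ∀ y y' : J → F, (∀ p, ∑ j, w (a p) j * y j = ∑ j, w (a p) j * y' j) →
        ∀ r, ∑ j, w r j * y j = ∑ j, w r j * y' j := by
  obtain ⟨κ, a, ha, hspan, hli⟩ := exists_linearIndependent' F w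
  have : Finite κ := Finite.of_injective a ha
  refine ⟨κ, Fintype.ofFinite κ, a, ?_, ?_⟩
  · let _ : Fintype κ := Fintype.ofFinite κ
    simpa using hli.fintype_card_le_finrank
  · intro y y' h r
    have hr : w r ∈ Submodule.span F (Set.range (w ∘ a)) := by
      rw [hspan]
      exact Submodule.subset_span ⟨r, rfl⟩
    refine Submodule.span_induction
      (p := fun u _ => ∑ j, u j * y j = ∑ j, u j * y' j) ?_ ?_ ?_ ?_ hr
    · rintro _ ⟨p, rfl⟩
      exact h p
    · simp
    · intro u u' _ _ hu hu'
      simp only [Pi.add_apply, add_mul, Finset.sum_add_distrib, hu, hu']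
    · intro c u _ hu
      simp only [Pi.smul_apply, smul_eq_mul, mul_assoc, ← Finset.mul_sum, hu]

/-- Equality of two matrices from equality after deleting column `i` and equality of column `i`. -/
lemma matrix_eq_of_col {F : Type} {e : ℕ} (M M' : Matrix (Fin e) (Fin (e + 1)) F)
    (i : Fin (e + 1)) (hB : M.submatrix id i.succAbove = M'.submatrix id i.succAbove)
    (hc : ∀ r, M r i = M' r i) : M = M' := by
  ext r j
  rcases Fin.eq_self_or_eq_succAbove i j with rfl | ⟨t, rfl⟩
  · exact hc r
  · exact congrFun (congrFun hB r) t

/-- The matrices with a prescribed submatrix away from column `i`, entries in `A`, and `vmat` having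
its first nonzero coordinate at `i` number at most `|A| ^ (e - i)`. -/
lemma card_fiber_le {F : Type} [Field F] {e : ℕ} (he : 1 ≤ e) (A : Finset F)
    (i : Fin (e + 1)) (B : Matrix (Fin e) (Fin e) F)
    (S : Finset (Matrix (Fin e) (Fin (e + 1)) F))
    (hA : ∀ M ∈ S, ∀ r j, M r j ∈ A) (hB : ∀ M ∈ S, M.submatrix id i.succAbove = B)
    (hlt : ∀ M ∈ S, ∀ j, j < i → vmat M j = 0) (hi : ∀ M ∈ S, vmat M i ≠ 0) :
    S.card ≤ A.card ^ (e - (i : ℕ)) := by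
  rcases S.eq_empty_or_nonempty with rfl | ⟨M₀, hM₀⟩
  · simp
  have hApos : 1 ≤ A.card := Finset.card_pos.mpr ⟨_, hA M₀ hM₀ ⟨0, he⟩ i⟩
  obtain ⟨κ, _, a, hκ, hdet⟩ :=
    exists_rows_determine (fun (r : Fin e) (j : {j : Fin (e + 1) // i < j}) => M₀ r j)
  have hcard : Fintype.card {j : Fin (e + 1) // i < j} = e - (i : ℕ) := by
    rw [Fintype.card_subtype]
    have : (Finset.univ.filter fun j : Fin (e + 1) => i < j) = Finset.Ioi i := by
      ext j
      simp
    rw [this, Fin.card_Ioi]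
    omega
  have hcol : ∀ M ∈ S, ∀ r, M r i
      = ∑ j : {j : Fin (e + 1) // i < j}, M₀ r j * (-(vmat M j) / vmat M i) := by
    intro M hM r
    rw [col_eq_of_vmat M i (hlt M hM) (hi M hM) r]
    refine Finset.sum_congr rfl fun j _ => ?_
    congr 1
    obtain ⟨t, ht⟩ := Fin.exists_succAbove_eq j.2.ne'
    have := congrFun (congrFun ((hB M hM).trans (hB M₀ hM₀).symm) r) t
    simpa [ht] using this
  classical
  calc S.card ≤ (Fintype.piFinset fun _ : κ => A).card := by
        refine Finset.card_le_card_of_injOn (fun M p => M (a p) i) ?_ ?_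
        · intro M hM
          simp only [Finset.mem_coe, Fintype.mem_piFinset]
          exact fun p => hA M hM _ _
        · intro M hM M' hM' h
          refine matrix_eq_of_col M M' i ((hB M hM).trans (hB M' hM').symm) fun r => ?_
          rw [hcol M hM r, hcol M' hM' r]
          refine hdet _ _ (fun p => ?_) r
          rw [← hcol M hM, ← hcol M' hM']
          exact congrFun h p
    _ = A.card ^ Fintype.card κ := by simp
    _ ≤ A.card ^ (e - (i : ℕ)) := Nat.pow_le_pow_right hApos (hκ.trans hcard.le)

/-- A sum of squared fibre sizes counts pairs in a common fibre. -/
lemma sum_sq_eq_card {α β : Type} [Fintype α] [Fintype β] [DecidableEq β]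
    (p : α → Prop) (f : α → β) (q : β → Prop) [DecidablePred p] [DecidablePred q] :
    ∑ b ∈ Finset.univ.filter q, Nat.card {m : α // p m ∧ f m = b} ^ 2
      = (Finset.univ.filter fun m : α × α =>
          p m.1 ∧ p m.2 ∧ f m.1 = f m.2 ∧ q (f m.1)).card := by
  classical
  rw [Finset.card_eq_sum_card_fiberwise (f := fun m : α × α => f m.1)
    (t := Finset.univ.filter q)]
  · refine Finset.sum_congr rfl fun b hb => ?_
    rw [Nat.card_eq_fintype_card, Fintype.card_subtype, sq, ← Finset.card_product]
    congr 1
    have hqb : q b := (Finset.mem_filter.mp hb).2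
    ext ⟨m, m'⟩
    simp only [Finset.mem_product, Finset.mem_filter, Finset.mem_univ, true_and]
    constructor
    · rintro ⟨⟨h1, rfl⟩, h2, h3⟩
      exact ⟨⟨h1, h2, h3.symm, hqb⟩, rfl⟩
    · rintro ⟨⟨h1, h2, h3, h4⟩, rfl⟩
      exact ⟨⟨h1, rfl⟩, h2, h3.symm⟩
  · intro m hm
    simp only [Finset.coe_filter, Finset.mem_univ, true_and, Set.mem_ofPred_eq] at hm ⊢
    exact hm.2.2.2

/-- Statement 3, with `d = e + 1 ≥ 2` and the index `i : Fin (e + 1)` corresponding to the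
`1`-based index `i + 1 ∈ {1, …, d}`; the vectors `(0, …, 0, y_i, …, y_d)` are exactly the
`x : F_q^d` vanishing at coordinates before `i` and nonzero at `i`. -/
theorem stmt_3 (F : Type) [Field F] [Fintype F] [DecidableEq F]
    (hq : Odd (Fintype.card F)) (e : ℕ) (he : 1 ≤ e) (A : Finset F) (i : Fin (e + 1)) :
    ∑ x ∈ Finset.univ.filter
        (fun x : Fin (e + 1) → F => (∀ j, j < i → x j = 0) ∧ x i ≠ 0),
        gcount F e A x ^ 2 ≤
      A.card ^ (e - (i : ℕ)) *
        ∑ l ∈ Finset.univ.filter (fun l : F => l ≠ 0), matCount F e A l ^ 2 := by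
  classical
  unfold gcount matCount
  rw [sum_sq_eq_card, sum_sq_eq_card]
  refine Finset.card_le_mul_card_image_of_maps_to
    (f := fun m => (m.1.submatrix id i.succAbove, m.2.submatrix id i.succAbove)) ?_ _ ?_
  · rintro ⟨M, M'⟩ hm
    simp only [Finset.mem_filter, Finset.mem_univ, true_and] at hm ⊢
    obtain ⟨hM, hM', hv, -, hne⟩ := hm
    refine ⟨fun r t => hM _ _, fun r t => hM' _ _, ?_, ?_⟩
    · have h := congrFun hv i
      simp only [vmat] at h
      exact mul_left_cancel₀ (pow_ne_zero _ (neg_ne_zero.mpr one_ne_zero)) h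
    · exact right_ne_zero_of_mul hne
  -- In a fibre the first component determines the second, so it suffices to count the former.
  · rintro ⟨B, B'⟩ -
    rw [← Finset.card_image_of_injOn (f := Prod.fst)]
    · refine card_fiber_le he A i B _ ?_ ?_ ?_ ?_ <;>
      · intro M hM
        simp only [Finset.mem_image, Finset.mem_filter, Finset.mem_univ, true_and,
          Prod.mk.injEq] at hM
        obtain ⟨m, ⟨⟨h1, h2, h3, h4, h5⟩, h6, h7⟩, rfl⟩ := hM
        assumption
    · rintro ⟨M, M'⟩ hm ⟨N, N'⟩ hn h
      simp only [Finset.coe_filter, Finset.mem_filter, Finset.mem_univ, true_and,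
        Set.mem_ofPred_eq, Prod.mk.injEq] at hm hn h
      subst h
      obtain ⟨⟨-, -, hv, hlt, hne⟩, -, hB⟩ := hm
      obtain ⟨⟨-, -, hv', -, -⟩, -, hB'⟩ := hn
      have hMN : M' = N' := by
        refine matrix_eq_of_col M' N' i (hB.trans hB'.symm) fun r => ?_
        rw [col_eq_of_vmat M' i (hv ▸ hlt) (hv ▸ hne) r,
          col_eq_of_vmat N' i (hv' ▸ hlt) (hv' ▸ hne) r, ← hv, ← hv']
        refine Finset.sum_congr rfl fun j _ => ?_
        congr 1
        obtain ⟨t, ht⟩ := Fin.exists_succAbove_eq j.2.ne'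
        have := congrFun (congrFun (hB.trans hB'.symm) r) t
        simpa [ht] using this
      rw [hMN]
end

section
/- For every integer d ≥ 2, every subset A ⊆ F_q, every index i with 1 ≤ i ≤ d, and every y_i ∈ F_q with y_i ≠ 0, one has Σ_{y_{i+1}, …, y_d ∈ F_q} g(0, …, 0, y_i, y_{i+1}, …, y_d) ≤ |A|^{d−i} · N_{d−1}(A; (−1)^i y_i). -/
/-- The vector of signed maximal minors is in the kernel: expand along the first row the
determinant of `M` with a copy of its row `r` put on top. -/
lemma sum_vmat_mul {F : Type} [CommRing F] {e : ℕ} (M : Matrix (Fin e) (Fin (e + 1)) F)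
    (r : Fin e) : ∑ j, vmat M j * M r j = 0 := by
  have h0 : (Matrix.of (Fin.cons (M r) M : Fin (e + 1) → Fin (e + 1) → F)).det = 0 :=
    Matrix.det_zero_of_row_eq (i := 0) (j := r.succ) (Fin.succ_ne_zero r).symm rfl
  rw [Matrix.det_succ_row_zero] at h0
  rw [← neg_eq_zero, ← h0, ← Finset.sum_neg_distrib]
  refine Finset.sum_congr rfl fun j _ => ?_
  have : (Matrix.of (Fin.cons (M r) M : Fin (e + 1) → Fin (e + 1) → F)).submatrix
      Fin.succ j.succAbove = M.submatrix id j.succAbove := rfl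
  rw [this]
  change -((-1 : F) ^ ((j : ℕ) + 1) * (M.submatrix id j.succAbove).det * M r j) =
    (-1) ^ (j : ℕ) * M r j * (M.submatrix id j.succAbove).det
  ring

open Classical in
/-- A subspace of `F ^ e` of dimension at most `k` has at most `|A| ^ k` points in `A ^ e`. -/
lemma card_filter_mem_le {F : Type} [Field F] [Fintype F] {e : ℕ} (he : 1 ≤ e) (A : Finset F)
    (W : Submodule F (Fin e → F)) (k : ℕ) (hk : Module.finrank F W ≤ k) :
    (Finset.univ.filter fun c : Fin e → F => c ∈ W ∧ ∀ r, c r ∈ A).card ≤ A.card ^ k := by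
  rcases A.eq_empty_or_nonempty with rfl | hA
  · rw [Finset.filter_false_of_mem]
    · simp
    · rintro c - ⟨-, h⟩
      simpa using h ⟨0, he⟩
  -- A maximal independent subfamily `f` of the coordinate functionals on `W`.
  let φ : Fin e → Module.Dual F W := fun r => (LinearMap.proj r).comp W.subtype
  obtain ⟨f, hf, hspan, -⟩ := Submodule.exists_fun_fin_finrank_span_eq F (Set.range φ)
  choose g hg using hf
  have hn : Module.finrank F (Submodule.span F (Set.range φ)) ≤ k :=
    ((Submodule.finrank_le _).trans (Subspace.dual_finrank_eq).le).trans hk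
  refine le_trans ?_ (Nat.pow_le_pow_right hA.card_pos hn)
  have hcard : (Fintype.piFinset fun _ : Fin (Module.finrank F
      (Submodule.span F (Set.range φ))) => A).card
      = A.card ^ Module.finrank F (Submodule.span F (Set.range φ)) := by simp
  rw [← hcard]
  refine Finset.card_le_card_of_injOn (fun c a => c (g a)) ?_ ?_
  · intro c hc
    simp only [Finset.coe_filter, Finset.mem_univ, true_and, Set.mem_ofPred_eq] at hc
    simpa using fun a => hc.2 (g a)
  · intro c hc c' hc' h
    simp only [Finset.coe_filter, Finset.mem_univ, true_and, Set.mem_ofPred_eq] at hc hc'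
    have hw : ∀ ψ ∈ Submodule.span F (Set.range f),
        ψ (⟨c, hc.1⟩ : W) = ψ (⟨c', hc'.1⟩ : W) := by
      intro ψ hψ
      induction hψ using Submodule.span_induction with
      | mem x hx =>
        obtain ⟨a, rfl⟩ := hx
        rw [← hg a]
        exact congrFun h a
      | zero => rfl
      | add x y _ _ hx hy => simp [hx, hy]
      | smul a x _ hx => simp [hx]
    ext r
    exact hw (φ r) (hspan.symm.le (Submodule.subset_span ⟨r, rfl⟩))

/-- The span of the columns of `B` that stand to the right of position `i` once a new column is
inserted there. -/
def rightSpan {F : Type} [Field F] {e : ℕ} (i : Fin (e + 1)) (B : Matrix (Fin e) (Fin e) F) :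
    Submodule F (Fin e → F) :=
  Submodule.span F (Set.range fun j : {j : Fin e // i ≤ j.castSucc} => fun r => B r j)

lemma finrank_rightSpan_le {F : Type} [Field F] {e : ℕ} (i : Fin (e + 1))
    (B : Matrix (Fin e) (Fin e) F) : Module.finrank F (rightSpan i B) ≤ e - (i : ℕ) := by
  refine (finrank_range_le_card _).trans ?_
  rw [Fintype.card_subtype]
  have : (Finset.univ.filter fun j : Fin e => i ≤ j.castSucc).card ≤
      (Finset.Ico (i : ℕ) e).card := by
    refine Finset.card_le_card_of_injOn (fun j => (j : ℕ)) ?_ (fun a _ b _ h => Fin.ext h)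
    intro j hj
    simpa [Fin.le_def] using hj
  simpa using this

/-- If `vmat M` vanishes before `i` but not at `i`, then column `i` of `M` is a combination of
the columns to its right. -/
lemma col_mem_rightSpan {F : Type} [Field F] {e : ℕ} (M : Matrix (Fin e) (Fin (e + 1)) F)
    (i : Fin (e + 1)) (h0 : ∀ j, j < i → vmat M j = 0) (hi : vmat M i ≠ 0) :
    (fun r => M r i) ∈ rightSpan i (M.submatrix id i.succAbove) := by
  have h : (fun r => M r i) =
      ∑ j : Fin e, (-(vmat M i)⁻¹ * vmat M (i.succAbove j)) • fun r => M r (i.succAbove j) := by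
    ext r
    have hs := sum_vmat_mul M r
    rw [Fin.sum_univ_succAbove _ i] at hs
    simp only [Finset.sum_apply, Pi.smul_apply, smul_eq_mul, mul_assoc]
    rw [← Finset.mul_sum, ← neg_eq_of_add_eq_zero_right hs]
    field_simp
  rw [h]
  refine Submodule.sum_mem _ fun j _ => ?_
  by_cases hj : i ≤ j.castSucc
  · exact Submodule.smul_mem _ _ (Submodule.subset_span ⟨⟨j, hj⟩, rfl⟩)
  · rw [not_le] at hj
    rw [Fin.succAbove_of_castSucc_lt _ _ hj, h0 _ hj]
    simp

/-- Statement 5, with `d = e + 1 ≥ 2` and the index `i : Fin (e + 1)` corresponding to the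
`1`-based index `i + 1 ∈ {1, …, d}`; the sum over `(y_{i+1}, …, y_d)` is the sum over all
vectors `x` vanishing before coordinate `i` and equal to the fixed `y ≠ 0` at `i`. -/
theorem stmt_5 (F : Type) [Field F] [Fintype F] [DecidableEq F]
    (hq : Odd (Fintype.card F)) (e : ℕ) (he : 1 ≤ e) (A : Finset F) (i : Fin (e + 1))
    (y : F) (hy : y ≠ 0) :
    ∑ x ∈ Finset.univ.filter
        (fun x : Fin (e + 1) → F => (∀ j, j < i → x j = 0) ∧ x i = y),
        gcount F e A x ≤
      A.card ^ (e - (i : ℕ)) * matCount F e A ((-1 : F) ^ ((i : ℕ) + 1) * y) := by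
  classical
  set S : Finset (Matrix (Fin e) (Fin (e + 1)) F) := Finset.univ.filter fun M =>
    (∀ a b, M a b ∈ A) ∧ (∀ j, j < i → vmat M j = 0) ∧ vmat M i = y with hS
  set T : Finset (Matrix (Fin e) (Fin e) F) := Finset.univ.filter fun B =>
    (∀ a b, B a b ∈ A) ∧ B.det = (-1 : F) ^ ((i : ℕ) + 1) * y with hT
  have hTc : matCount F e A ((-1 : F) ^ ((i : ℕ) + 1) * y) = T.card := by
    rw [matCount, Nat.card_eq_fintype_card, Fintype.card_subtype]
  have hSc : ∑ x ∈ Finset.univ.filter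
      (fun x : Fin (e + 1) → F => (∀ j, j < i → x j = 0) ∧ x i = y), gcount F e A x = S.card := by
    rw [Finset.card_eq_sum_card_fiberwise (f := vmat) (s := S)
      (t := Finset.univ.filter
        (fun x : Fin (e + 1) → F => (∀ j, j < i → x j = 0) ∧ x i = y))]
    · refine Finset.sum_congr rfl fun x hx => ?_
      rw [gcount, Nat.card_eq_fintype_card, Fintype.card_subtype, hS, Finset.filter_filter]
      congr 1
      ext M
      simp only [Finset.mem_filter, Finset.mem_univ, true_and] at hx ⊢
      constructor
      · rintro ⟨h, rfl⟩
        exact ⟨⟨h, hx⟩, rfl⟩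
      · rintro ⟨⟨h, -⟩, h'⟩
        exact ⟨h, h'⟩
    · intro M hM
      simp only [hS, Finset.coe_filter, Finset.mem_univ, true_and, Set.mem_ofPred_eq] at hM ⊢
      exact hM.2
  rw [hTc, hSc]
  refine Finset.card_le_mul_card_image_of_maps_to
    (f := fun M : Matrix (Fin e) (Fin (e + 1)) F => M.submatrix id i.succAbove) ?_ _ ?_
  · intro M hM
    simp only [hS, hT, Finset.mem_filter, Finset.mem_univ, true_and] at hM ⊢
    refine ⟨fun a b => hM.1 _ _, ?_⟩
    rw [← hM.2.2, vmat, ← mul_assoc, ← mul_pow]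
    simp
  · intro B _
    refine le_trans ?_ (card_filter_mem_le he A (rightSpan i B) _ (finrank_rightSpan_le i B))
    refine Finset.card_le_card_of_injOn (fun M r => M r i) ?_ ?_
    · intro M hM
      simp only [hS, Finset.coe_filter, Finset.mem_filter, Finset.mem_univ, true_and,
        Set.mem_ofPred_eq] at hM ⊢
      obtain ⟨⟨hA, h0, hi⟩, rfl⟩ := hM
      exact ⟨col_mem_rightSpan M i h0 (hi ▸ hy), fun r => hA r i⟩
    · intro M hM M' hM' h
      simp only [Finset.coe_filter, Set.mem_ofPred_eq] at hM hM'
      ext r j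
      rcases Fin.eq_self_or_eq_succAbove i j with rfl | ⟨j, rfl⟩
      · exact congrFun h r
      · exact congrFun (congrFun (hM.2.trans hM'.2.symm) r) j
end

section
/- For every integer d ≥ 2 and every subset A ⊆ F_q, one has Σ_{l ∈ F_q, l ≠ 0} N_d(A;l)² ≤ |A|^{2d²}/q + q^{d−1} · |A|^{d+1} · (Σ_{i=0}^{d−1} |A|^i) · Σ_{l ∈ F_q, l ≠ 0} N_{d−1}(A;l)². -/
open Finset

/-! ### The second moment bound -/

theorem card_hyperplane {F : Type} [Field F] [Fintype F] [DecidableEq F] (n : ℕ)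
    (w : Fin (n + 1) → F) (hw : w ≠ 0) :
    #{z : Fin (n + 1) → F | z ⬝ᵥ w = 0} = Fintype.card F ^ n := by
  classical
  let φ : Module.Dual F (Fin (n + 1) → F) := dotProductBilin F F w
  have hφ : φ ≠ 0 := by
    intro h
    apply hw
    ext k
    have := congrArg (fun g => g (Pi.single k 1)) h
    simpa [φ] using this
  have h1 := Module.Dual.finrank_ker_add_one_of_ne_zero hφ
  have h2 := Module.card_eq_pow_finrank (K := F) (V := LinearMap.ker φ)
  rw [Module.finrank_fin_fun] at h1
  rw [Nat.add_right_cancel h1] at h2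
  rw [← h2, ← Fintype.card_subtype]
  refine Fintype.card_congr (Equiv.subtypeEquivRight fun z => ?_)
  simp [φ, dotProduct_comm]

/-- The deviations from uniformity of `R ↦ z ⬝ᵥ c R` on `T`, squared and summed over all
vectors `z`. Squaring out, a pair with `c R ≠ c R'` has `z ⬝ᵥ (c R - c R') = 0` for exactly the
expected proportion `1 / q` of the `z`, so only the pairs with `c R = c R'` contribute. -/
theorem sum_energy {F : Type} [Field F] [Fintype F] [DecidableEq F] {ι : Type}
    (n : ℕ) (T : Finset ι) (c : ι → Fin (n + 1) → F) :
    ∑ z : Fin (n + 1) → F, ∑ l : F, ((#{R ∈ T | z ⬝ᵥ c R = l} : ℝ) - #T / Fintype.card F) ^ 2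
      = ((Fintype.card F : ℝ) - 1) * (Fintype.card F : ℝ) ^ n *
        #{p ∈ T ×ˢ T | c p.1 = c p.2} := by
  classical
  set q : ℝ := (Fintype.card F : ℝ) with hq
  have hq0 : q ≠ 0 := by rw [hq]; exact_mod_cast Fintype.card_ne_zero
  have hsum (z : Fin (n + 1) → F) : ∑ l : F, (#{R ∈ T | z ⬝ᵥ c R = l} : ℝ) = #T := by
    rw [← Nat.cast_sum, ← card_eq_sum_card_fiberwise (f := fun R => z ⬝ᵥ c R) (t := univ)]
    simp
  have hsq (z : Fin (n + 1) → F) : ∑ l : F, (#{R ∈ T | z ⬝ᵥ c R = l} : ℝ) ^ 2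
      = ∑ p ∈ T ×ˢ T, if z ⬝ᵥ (c p.1 - c p.2) = 0 then (1 : ℝ) else 0 := by
    have (l : F) : (#{R ∈ T | z ⬝ᵥ c R = l} : ℝ) ^ 2
        = ∑ p ∈ T ×ˢ T, if z ⬝ᵥ c p.1 = l ∧ z ⬝ᵥ c p.2 = l then (1 : ℝ) else 0 := by
      rw [sq, card_filter, Nat.cast_sum, sum_mul_sum, sum_product]
      refine sum_congr rfl fun R _ => sum_congr rfl fun R' _ => ?_
      by_cases h1 : z ⬝ᵥ c R = l <;> by_cases h2 : z ⬝ᵥ c R' = l <;> simp [h1, h2]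
    simp_rw [this]
    rw [sum_comm]
    refine sum_congr rfl fun p _ => ?_
    simp only [dotProduct_sub, sub_eq_zero]
    by_cases h : z ⬝ᵥ c p.1 = z ⬝ᵥ c p.2
    · simp [h]
    · rw [if_neg h]
      refine sum_eq_zero fun l _ => if_neg ?_
      rintro ⟨h1, h2⟩
      exact h (h1.trans h2.symm)
  have hG (z : Fin (n + 1) → F) :
      ∑ l : F, ((#{R ∈ T | z ⬝ᵥ c R = l} : ℝ) - #T / q) ^ 2
        = (∑ p ∈ T ×ˢ T, if z ⬝ᵥ (c p.1 - c p.2) = 0 then (1 : ℝ) else 0) - (#T : ℝ) ^ 2 / q := by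
    simp_rw [sub_sq]
    rw [sum_add_distrib, sum_sub_distrib, ← sum_mul, ← mul_sum, hsum, hsq, sum_const, card_univ,
      nsmul_eq_mul, ← hq]
    field_simp
    ring
  simp_rw [hG]
  rw [sum_sub_distrib, sum_comm, sum_const, card_univ, nsmul_eq_mul]
  have hin (p : ι × ι) : (∑ z : Fin (n + 1) → F, if z ⬝ᵥ (c p.1 - c p.2) = 0 then (1 : ℝ) else 0)
      = q ^ n + if c p.1 = c p.2 then q ^ (n + 1) - q ^ n else 0 := by
    rw [sum_boole]
    by_cases h : c p.1 = c p.2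
    · simp [h, hq]
    · rw [card_hyperplane n _ (sub_ne_zero.2 h), if_neg h]
      simp [hq]
  simp_rw [hin]
  rw [sum_add_distrib, sum_const, card_product, ← sum_filter, sum_const]
  simp only [nsmul_eq_mul, Fintype.card_pi, prod_const, card_univ, Fintype.card_fin]
  push_cast
  rw [← hq]
  field_simp
  ring

/-- Second moment of `(x, R) ↦ x ⬝ᵥ c R` on `X × T`. After Cauchy–Schwarz over `x`, the squared
deviation `G x` depends only on the line through `x`. As each nonzero vector is a nonzero multiple
of at most `a` elements of `X`, the sum of `G` over `X` is at most `a / (q - 1)` times its sum over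
all vectors, which `sum_energy` evaluates. -/
theorem moment_le {F : Type} [Field F] [Fintype F] [DecidableEq F] {ι : Type}
    (n a : ℕ) (X : Finset (Fin (n + 1) → F)) (T : Finset ι) (c : ι → Fin (n + 1) → F)
    (hX : ∀ z, #{p ∈ ({t : F | t ≠ 0} : Finset F) ×ˢ X | p.1 • p.2 = z} ≤ a) :
    ∑ l : F, (∑ x ∈ X, (#{R ∈ T | x ⬝ᵥ c R = l} : ℝ)) ^ 2
      ≤ ((#X : ℝ) * #T) ^ 2 / Fintype.card F
        + #X * (a * (Fintype.card F : ℝ) ^ n * #{p ∈ T ×ˢ T | c p.1 = c p.2}) := by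
  classical
  set q : ℝ := (Fintype.card F : ℝ) with hq
  have hq1 : 1 < q := by rw [hq]; exact_mod_cast Fintype.one_lt_card
  set G : (Fin (n + 1) → F) → ℝ := fun z =>
    ∑ l : F, ((#{R ∈ T | z ⬝ᵥ c R = l} : ℝ) - #T / q) ^ 2 with hG
  have hG0 (z) : 0 ≤ G z := sum_nonneg fun l _ => sq_nonneg _
  have hsum (z : Fin (n + 1) → F) : ∑ l : F, (#{R ∈ T | z ⬝ᵥ c R = l} : ℝ) = #T := by
    rw [← Nat.cast_sum, ← card_eq_sum_card_fiberwise (f := fun R => z ⬝ᵥ c R) (t := univ)]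
    simp
  have hscale (t : F) (ht : t ≠ 0) (z) : G (t • z) = G z := by
    simp only [hG]
    rw [← Equiv.sum_comp (Equiv.mulLeft₀ t ht)]
    refine sum_congr rfl fun l _ => ?_
    simp [smul_dotProduct, ht]
  have havg : ∑ x ∈ X, G x ≤ a * q ^ n * #{p ∈ T ×ˢ T | c p.1 = c p.2} := by
    have h1 : (q - 1) * ∑ x ∈ X, G x = ∑ p ∈ ({t : F | t ≠ 0} : Finset F) ×ˢ X, G (p.1 • p.2) := by
      rw [sum_product]
      rw [sum_congr (s₁ := ({t : F | t ≠ 0} : Finset F)) rfl (g := fun _ => ∑ x ∈ X, G x)]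
      · rw [sum_const, nsmul_eq_mul]
        congr 1
        rw [filter_ne', card_erase_of_mem (mem_univ _), card_univ,
          Nat.cast_sub Fintype.card_pos]
        simp [hq]
      · intro t ht
        exact sum_congr rfl fun x _ => hscale t (by simpa using ht) x
    have h2 : ∑ p ∈ ({t : F | t ≠ 0} : Finset F) ×ˢ X, G (p.1 • p.2) ≤ a * ∑ z, G z := by
      rw [← sum_fiberwise _ (fun p : F × (Fin (n + 1) → F) => p.1 • p.2), mul_sum]
      refine sum_le_sum fun z _ => ?_
      rw [sum_congr rfl (g := fun _ => G z)
        (fun p hp => by rw [(mem_filter.1 hp).2]), sum_const, nsmul_eq_mul]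
      exact mul_le_mul_of_nonneg_right (by exact_mod_cast hX z) (hG0 z)
    have h3 := sum_energy n T c
    rw [← hq] at h3
    rw [hG] at h1 h2 ⊢
    rw [h3, ← h1] at h2
    refine le_of_mul_le_mul_left (h2.trans_eq ?_) (sub_pos.2 hq1)
    ring
  have hmain : ∑ l : F, (∑ x ∈ X, (#{R ∈ T | x ⬝ᵥ c R = l} : ℝ)) ^ 2
      = ((#X : ℝ) * #T) ^ 2 / q
        + ∑ l : F, (∑ x ∈ X, ((#{R ∈ T | x ⬝ᵥ c R = l} : ℝ) - #T / q)) ^ 2 := by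
    simp_rw [sum_sub_distrib, sub_sq]
    rw [sum_add_distrib, sum_sub_distrib, ← sum_mul, ← mul_sum, sum_comm (s := univ)]
    simp_rw [hsum]
    simp only [sum_const, nsmul_eq_mul, card_univ, ← hq]
    field_simp
    ring
  rw [hmain]
  gcongr
  calc _ ≤ ∑ l : F, #X * ∑ x ∈ X, ((#{R ∈ T | x ⬝ᵥ c R = l} : ℝ) - #T / q) ^ 2 :=
        sum_le_sum fun l _ => sq_sum_le_card_mul_sum_sq
    _ = #X * ∑ x ∈ X, G x := by rw [← mul_sum, sum_comm]
    _ ≤ _ := by gcongr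

/-! ### Points of `A ^ n` in a coset -/

/-- A coset of an `m`-dimensional subspace of `F ^ n` contains at most `|A| ^ m` points with all
coordinates in `A`: fixing a coordinate that does not vanish identically on the subspace lowers
its dimension. -/
theorem card_coset_le {F : Type} [Field F] [DecidableEq F] {n : ℕ} (A : Finset F)
    (m : ℕ) : ∀ (W : Submodule F (Fin n → F)) (v : Fin n → F) (S : Finset (Fin n → F)),
    Module.finrank F W = m → (∀ r ∈ S, (∀ i, r i ∈ A) ∧ r - v ∈ W) → #S ≤ #A ^ m := by
  induction m using Nat.strong_induction_on with
  | _ m ih =>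
  intro W v S hm hS
  by_cases hW : W = ⊥
  · subst hW
    simp only [finrank_bot] at hm
    subst hm
    rw [pow_zero, card_le_one]
    intro x hx y hy
    have h1 := (hS x hx).2
    have h2 := (hS y hy).2
    simp only [Submodule.mem_bot, sub_eq_zero] at h1 h2
    rw [h1, h2]
  obtain ⟨w, hwW, hw0⟩ := Submodule.exists_mem_ne_zero_of_ne_bot hW
  obtain ⟨i, hi⟩ := Function.ne_iff.1 hw0
  let W' : Submodule F (Fin n → F) := W ⊓ LinearMap.ker (LinearMap.proj i)
  have hlt : Module.finrank F W' < m := by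
    rw [← hm]
    refine Submodule.finrank_lt_finrank_of_lt (lt_of_le_of_ne inf_le_left ?_)
    intro h
    have : w ∈ W' := h ▸ hwW
    exact hi (by simpa using this.2)
  have hfib : #S ≤ ∑ α ∈ A, #{r ∈ S | r i = α} :=
    (card_eq_sum_card_fiberwise (f := fun r : Fin n → F => r i)
      (fun r hr => (hS r hr).1 i)).le
  refine hfib.trans ?_
  obtain ⟨k, rfl⟩ : ∃ k, m = k + 1 := ⟨m - 1, by omega⟩
  calc _ ≤ ∑ α ∈ A, #A ^ k := sum_le_sum fun α hα => ?_
    _ = _ := by rw [sum_const, smul_eq_mul, pow_succ']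
  have hA : 0 < #A := card_pos.2 ⟨α, hα⟩
  rcases ({r ∈ S | r i = α} : Finset _).eq_empty_or_nonempty with h | ⟨r₀, hr₀⟩
  · simp [h]
  refine le_trans (ih _ hlt W' r₀ _ rfl ?_) (Nat.pow_le_pow_right hA (by omega))
  rw [mem_filter] at hr₀
  intro r hr
  rw [mem_filter] at hr
  refine ⟨(hS r hr.1).1, ?_, by simp [hr.2, hr₀.2]⟩
  have := W.sub_mem (hS r hr.1).2 (hS r₀ hr₀.1).2
  simpa using this

/-! ### Cofactor vectors -/

/-- The vector of signed maximal minors of an `n × (n + 1)` matrix: `cofVec R k` is `(-1) ^ k` times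
the minor omitting column `k`, i.e. the cofactor of the `k`-th entry of a row placed on top
of `R`. -/
def cofVec {F : Type} [CommRing F] {n : ℕ} (R : Matrix (Fin n) (Fin (n + 1)) F) :
    Fin (n + 1) → F :=
  fun k => (-1) ^ (k : ℕ) * (R.submatrix id k.succAbove).det

theorem det_cons_eq {F : Type} [CommRing F] {n : ℕ} (x : Fin (n + 1) → F)
    (R : Matrix (Fin n) (Fin (n + 1)) F) :
    (Matrix.of (Fin.cons x R : Fin (n + 1) → Fin (n + 1) → F)).det = x ⬝ᵥ cofVec R := by
  rw [Matrix.det_succ_row_zero, dotProduct]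
  refine sum_congr rfl fun k _ => ?_
  have : (Matrix.of (Fin.cons x R : Fin (n + 1) → Fin (n + 1) → F)).submatrix Fin.succ k.succAbove
      = R.submatrix id k.succAbove := by
    rfl
  rw [this]
  change _ * x k * _ = x k * (_ * _)
  ring

theorem row_dot_cofVec {F : Type} [CommRing F] {n : ℕ} (R : Matrix (Fin n) (Fin (n + 1)) F)
    (i : Fin n) : R i ⬝ᵥ cofVec R = 0 := by
  rw [← det_cons_eq]
  refine Matrix.det_zero_of_row_eq (Fin.succ_ne_zero i).symm ?_
  rfl

/-- Solving `R *ᵥ cofVec R = 0` for column `j`: it is determined by the cofactor vector and the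
other columns as soon as `cofVec R j ≠ 0`. -/
theorem col_mul_cofVec {F : Type} [CommRing F] {n : ℕ} (R : Matrix (Fin n) (Fin (n + 1)) F)
    (j : Fin (n + 1)) (i : Fin n) :
    cofVec R j * R i j = -∑ k, cofVec R (j.succAbove k) * R.submatrix id j.succAbove i k := by
  have h := row_dot_cofVec R i
  rw [dotProduct, Fin.sum_univ_succAbove _ j] at h
  simp only [Matrix.submatrix_apply, id]
  simp only [mul_comm (R i _)] at h
  exact eq_neg_of_add_eq_zero_left h

open Classical in
/-- The `m × n` matrices all of whose entries lie in `A`. -/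
noncomputable def matsIn {F : Type} [Fintype F] (m n : ℕ) (A : Finset F) :
    Finset (Matrix (Fin m) (Fin n) F) :=
  {M | ∀ i j, M i j ∈ A}

/-- Pairs of `n × (n + 1)` matrices with the same nonzero cofactor vector `c`, classified by the
last index `j` with `c j ≠ 0`. Deleting column `j` leaves a pair of square matrices `(X, X')` with
the same nonzero determinant. The deleted column of the first matrix lies in the span of the first
`j` columns of `X`, hence has at most `|A| ^ j` possible values; it determines `c`, and `c` together
with `X'` determines the deleted column of the second matrix. -/
theorem card_pairs_le {F : Type} [Field F] [Fintype F] [DecidableEq F] (n : ℕ) (A : Finset F)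
    (hA : A.Nonempty) :
    #{p ∈ {R ∈ matsIn n (n + 1) A | cofVec R ≠ 0} ×ˢ {R ∈ matsIn n (n + 1) A | cofVec R ≠ 0} |
        cofVec p.1 = cofVec p.2}
      ≤ (∑ i ∈ range (n + 1), #A ^ i) *
        #{p ∈ matsIn n n A ×ˢ matsIn n n A | p.1.det = p.2.det ∧ p.1.det ≠ 0} := by
  classical
  set E := {p ∈ matsIn n n A ×ˢ matsIn n n A | p.1.det = p.2.det ∧ p.1.det ≠ 0} with hE
  -- `D j`: pairs whose common cofactor vector has its last nonzero entry at `j`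
  let D : Fin (n + 1) → Finset (Matrix (Fin n) (Fin (n + 1)) F × Matrix (Fin n) (Fin (n + 1)) F) :=
    fun j => {p ∈ matsIn n (n + 1) A ×ˢ matsIn n (n + 1) A |
      cofVec p.1 = cofVec p.2 ∧ cofVec p.1 j ≠ 0 ∧ ∀ k, j < k → cofVec p.1 k = 0}
  have hD (j : Fin (n + 1)) : #(D j) ≤ #A ^ (j : ℕ) * #E := by
    refine card_le_mul_card_image_of_maps_to
      (f := fun p => (p.1.submatrix id j.succAbove, p.2.submatrix id j.succAbove)) ?_ _ ?_
    · rintro ⟨R, R'⟩ hp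
      simp only [D, matsIn, mem_filter, mem_product, mem_univ, true_and] at hp
      obtain ⟨⟨hR, hR'⟩, hc, hj, -⟩ := hp
      have hcj := congrFun hc j
      simp only [cofVec] at hcj hj
      simp only [hE, matsIn, mem_filter, mem_product, mem_univ, true_and]
      refine ⟨⟨fun i k => hR _ _, fun i k => hR' _ _⟩, ?_, right_ne_zero_of_mul hj⟩
      exact mul_left_cancel₀ (left_ne_zero_of_mul hj) hcj
    · rintro ⟨X, X'⟩ -
      let W : Submodule F (Fin n → F) :=
        Submodule.span F (Set.range fun (k : {k : Fin n // (k : ℕ) < j}) i => X i k)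
      have hW : Module.finrank F W ≤ j := by
        refine (finrank_range_le_card _).trans ?_
        rw [Fintype.card_subtype]
        refine (card_le_card_of_injOn (t := range j) (fun k : Fin n => (k : ℕ)) ?_ ?_).trans
          (card_range _).le
        · intro k hk
          simpa using hk
        · intro k _ k' _ h
          exact Fin.ext h
      set S := {p ∈ D j | (p.1.submatrix id j.succAbove, p.2.submatrix id j.succAbove) = (X, X')}
        with hS
      have hSmem (p) (hp : p ∈ S) : (∀ i k, p.1 i k ∈ A) ∧ cofVec p.1 = cofVec p.2 ∧
          cofVec p.1 j ≠ 0 ∧ (∀ k, j < k → cofVec p.1 k = 0) ∧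
          p.1.submatrix id j.succAbove = X ∧ p.2.submatrix id j.succAbove = X' := by
        simp only [hS, D, matsIn, mem_filter, mem_product, mem_univ, true_and, Prod.mk.injEq] at hp
        tauto
      have hext (M M' : Matrix (Fin n) (Fin (n + 1)) F)
          (h : M.submatrix id j.succAbove = M'.submatrix id j.succAbove)
          (h' : ∀ i, M i j = M' i j) : M = M' := by
        ext i k
        rcases Fin.eq_self_or_eq_succAbove j k with rfl | ⟨k, rfl⟩
        · exact h' i
        · exact congrFun (congrFun h i) k
      rw [← card_image_of_injOn (f := fun p => fun i => p.1 i j) (s := S)]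
      · refine (card_coset_le A _ W 0 _ rfl ?_).trans
          (Nat.pow_le_pow_right (card_pos.2 hA) hW)
        intro r hr
        obtain ⟨p, hp, rfl⟩ := mem_image.1 hr
        obtain ⟨h1, -, h3, h4, h5, -⟩ := hSmem p hp
        refine ⟨fun i => h1 i j, ?_⟩
        rw [sub_zero, ← W.smul_mem_iff h3]
        have : (cofVec p.1 j • fun i => p.1 i j)
            = -∑ k, cofVec p.1 (j.succAbove k) • fun i => X i k := by
          ext i
          simp [col_mul_cofVec p.1 j i, ← h5, Finset.sum_apply]
        rw [this]
        refine W.neg_mem (W.sum_mem fun k _ => ?_)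
        by_cases hk : (k : ℕ) < j
        · exact W.smul_mem _ (Submodule.subset_span ⟨⟨k, hk⟩, rfl⟩)
        · rw [h4, zero_smul]
          · exact W.zero_mem
          · rw [Fin.succAbove_of_le_castSucc _ _ (by simpa [Fin.le_def] using hk), Fin.lt_def]
            simp
            omega
      · rintro p hp p' hp' h
        obtain ⟨-, h2, h3, -, h5, h6⟩ := hSmem p hp
        obtain ⟨-, h2', h3', -, h5', h6'⟩ := hSmem p' hp'
        have e1 : p.1 = p'.1 := hext _ _ (h5.trans h5'.symm) (congrFun h)
        refine Prod.ext e1 (hext _ _ (h6.trans h6'.symm) fun i => ?_)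
        have hcc : cofVec p.2 = cofVec p'.2 := by rw [← h2, ← h2', e1]
        have k1 := col_mul_cofVec p.2 j i
        have k2 := col_mul_cofVec p'.2 j i
        rw [h6, hcc] at k1
        rw [h6', ← k1] at k2
        refine (mul_left_cancel₀ ?_ k2).symm
        rw [← h2']
        exact h3'
  have hcover : {p ∈ {R ∈ matsIn n (n + 1) A | cofVec R ≠ 0} ×ˢ
      {R ∈ matsIn n (n + 1) A | cofVec R ≠ 0} | cofVec p.1 = cofVec p.2} ⊆ univ.biUnion D := by
    rintro ⟨R, R'⟩ hp
    simp only [mem_filter, mem_product] at hp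
    obtain ⟨⟨⟨hR, hR0⟩, hR', -⟩, hc⟩ := hp
    obtain ⟨k, hk⟩ := Function.ne_iff.1 hR0
    obtain ⟨j, hj, hmax⟩ := exists_max_image ({k | cofVec R k ≠ 0} : Finset (Fin (n + 1))) id
      ⟨k, by simpa using hk⟩
    simp only [mem_filter, mem_univ, true_and, id] at hj hmax
    simp only [D, mem_biUnion, mem_filter, mem_product, mem_univ, true_and]
    refine ⟨j, ⟨hR, hR'⟩, hc, hj, fun k hk => ?_⟩
    by_contra h
    exact absurd (hmax k h) (not_le.2 hk)
  refine (card_le_card hcover).trans (card_biUnion_le.trans ?_)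
  rw [← Fin.sum_univ_eq_sum_range (fun i => #A ^ i), sum_mul]
  exact sum_le_sum fun j _ => hD j

/-! ### Counting matrices by determinant -/

theorem matCount_eq {F : Type} [Field F] [Fintype F] [DecidableEq F] (d : ℕ) (A : Finset F)
    (t : F) : matCount F d A t = #{M ∈ matsIn d d A | M.det = t} := by
  classical
  rw [matCount, Nat.card_eq_fintype_card, Fintype.card_subtype, matsIn, filter_filter]

theorem sum_matCount_sq {F : Type} [Field F] [Fintype F] [DecidableEq F] (d : ℕ)
    (A : Finset F) :
    ∑ l ∈ univ.filter (fun l : F => l ≠ 0), matCount F d A l ^ 2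
      = #{p ∈ matsIn d d A ×ˢ matsIn d d A | p.1.det = p.2.det ∧ p.1.det ≠ 0} := by
  classical
  rw [card_eq_sum_card_fiberwise (f := fun p => p.1.det) (t := univ.filter (fun l : F => l ≠ 0))]
  · refine sum_congr rfl fun l hl => ?_
    rw [matCount_eq, sq, ← card_product]
    congr 1
    ext ⟨M, M'⟩
    simp only [mem_filter, mem_product, mem_univ, true_and] at hl ⊢
    grind
  · intro p hp
    simp at hp ⊢
    exact hp.2.2

/-- Expansion along the first row. For `t ≠ 0` neither the first row nor the cofactor vector of the
remaining rows can vanish. -/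
theorem matCount_succ {F : Type} [Field F] [Fintype F] [DecidableEq F] (n : ℕ) (A : Finset F)
    (t : F) (ht : t ≠ 0) : matCount F (n + 1) A t
      = ∑ x ∈ (Fintype.piFinset fun _ : Fin (n + 1) => A).erase 0,
          #{R ∈ {R ∈ matsIn n (n + 1) A | cofVec R ≠ 0} | x ⬝ᵥ cofVec R = t} := by
  classical
  rw [matCount_eq, ← card_sigma]
  symm
  refine card_bij (fun p _ => Matrix.of (Fin.cons p.1 p.2 : Fin (n + 1) → Fin (n + 1) → F)) ?_ ?_ ?_
  · rintro ⟨x, R⟩ hp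
    simp only [mem_sigma, mem_erase, Fintype.mem_piFinset, mem_filter, matsIn, mem_univ,
      true_and] at hp ⊢
    refine ⟨fun i j => ?_, (det_cons_eq x R).trans hp.2.2⟩
    refine Fin.cases ?_ (fun i => ?_) i
    · exact hp.1.2 j
    · exact hp.2.1.1 i j
  · rintro ⟨x, R⟩ _ ⟨x', R'⟩ _ h
    have h' := Fin.cons_injective2 (Matrix.of.injective h)
    simp only [Sigma.mk.injEq]
    exact ⟨h'.1, heq_of_eq h'.2⟩
  · intro M hM
    simp only [mem_filter, matsIn, mem_univ, true_and] at hM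
    have hMe :
        Matrix.of (Fin.cons (M 0) (fun i => M i.succ) : Fin (n + 1) → Fin (n + 1) → F) = M := by
      ext i j
      refine Fin.cases ?_ (fun i => ?_) i <;> rfl
    have hdet := det_cons_eq (M 0) (Matrix.of fun i => M i.succ)
    change (Matrix.of (Fin.cons (M 0) (fun i => M i.succ) : Fin (n + 1) → Fin (n + 1) → F)).det
      = _ at hdet
    rw [hMe, hM.2] at hdet
    refine ⟨⟨M 0, Matrix.of fun i => M i.succ⟩, ?_, hMe⟩
    simp only [mem_sigma, mem_erase, Fintype.mem_piFinset, mem_filter, matsIn, mem_univ,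
      true_and]
    refine ⟨⟨?_, fun j => hM.1 0 j⟩, ⟨fun i j => hM.1 _ j, ?_⟩, hdet.symm⟩
    · intro h
      rw [h, zero_dotProduct] at hdet
      exact ht hdet
    · intro h
      rw [h, dotProduct_zero] at hdet
      exact ht hdet

theorem card_matsIn {F : Type} [Fintype F] (m n : ℕ) (A : Finset F) :
    #(matsIn m n A) = #A ^ (m * n) := by
  classical
  have : #(matsIn m n A)
      = #(Fintype.piFinset fun _ : Fin m => Fintype.piFinset fun _ : Fin n => A) := by
    refine card_equiv Matrix.of.symm fun M => ?_
    simp [matsIn]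
  rw [this]
  simp [Fintype.card_piFinset, ← pow_mul, mul_comm]

/-- A nonzero coordinate of `z` recovers the scalar `t` in `t • x = z` from the corresponding
coordinate of `x`, which lies in `A`. -/
theorem card_scaling_le {F : Type} [Field F] [Fintype F] [DecidableEq F] (m : ℕ) (A : Finset F)
    (z : Fin m → F) :
    #{p ∈ ({t : F | t ≠ 0} : Finset F) ×ˢ (Fintype.piFinset fun _ : Fin m => A).erase 0 |
      p.1 • p.2 = z} ≤ #A := by
  classical
  by_cases hz : z = 0
  · rw [card_eq_zero.2]
    · exact Nat.zero_le _
    · rw [filter_eq_empty_iff]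
      rintro ⟨t, x⟩ hp h
      simp only [mem_product, mem_filter, mem_univ, true_and, mem_erase] at hp
      exact smul_ne_zero hp.1 hp.2.1 (h.trans hz)
  obtain ⟨k, hk⟩ := Function.ne_iff.1 hz
  refine card_le_card_of_injOn (fun p => p.2 k) ?_ ?_
  · rintro ⟨t, x⟩ hp
    simp at hp
    exact hp.1.2.2 k
  · rintro ⟨t, x⟩ hp ⟨t', x'⟩ hp' h
    simp only [coe_filter, mem_product, mem_filter, mem_univ, true_and, mem_erase,
      Set.mem_ofPred_eq] at hp hp' h
    have e1 := congrFun hp.2 k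
    have e2 := congrFun hp'.2 k
    simp only [Pi.smul_apply, smul_eq_mul] at e1 e2
    have hx : x' k ≠ 0 := by
      rintro h0
      rw [h0, mul_zero] at e2
      exact hk e2.symm
    have ht : t = t' := by
      rw [h, ← e2] at e1
      exact mul_right_cancel₀ hx e1
    subst ht
    have := hp.2.trans hp'.2.symm
    rw [smul_right_injective _ hp.1.1 this]

theorem stmt_7 (F : Type) [Field F] [Fintype F] [DecidableEq F]
    (hq : Odd (Fintype.card F)) (d : ℕ) (hd : 2 ≤ d) (A : Finset F) :
    ∑ l ∈ Finset.univ.filter (fun l : F => l ≠ 0), (matCount F d A l : ℝ) ^ 2 ≤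
      (A.card : ℝ) ^ (2 * d ^ 2) / (Fintype.card F : ℝ) +
        (Fintype.card F : ℝ) ^ (d - 1) * (A.card : ℝ) ^ (d + 1) *
            (∑ i ∈ Finset.range d, (A.card : ℝ) ^ i) *
          ∑ l ∈ Finset.univ.filter (fun l : F => l ≠ 0), (matCount F (d - 1) A l : ℝ) ^ 2 := by
  classical
  obtain ⟨n, rfl⟩ : ∃ n, d = n + 1 := ⟨d - 1, by omega⟩
  rw [Nat.add_sub_cancel]
  -- For empty `A` there are no matrices; `card_pairs_le` needs `1 ≤ |A|` for monotonicity of powers.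
  rcases A.eq_empty_or_nonempty with rfl | hA
  · rw [sum_eq_zero]
    · positivity
    · intro l _
      rw [matCount_eq, card_eq_zero.2]
      · simp
      · refine filter_eq_empty_iff.2 fun M hM => ?_
        simp [matsIn] at hM
  set X := (Fintype.piFinset fun _ : Fin (n + 1) => A).erase 0 with hX
  set T := {R ∈ matsIn n (n + 1) A | cofVec R ≠ 0} with hT
  have hXc : #X ≤ #A ^ (n + 1) := by
    refine card_erase_le.trans ?_
    simp [Fintype.card_piFinset]
  have hTc : #T ≤ #A ^ (n * (n + 1)) := (card_filter_le _ _).trans (card_matsIn _ _ _).le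
  have hP := card_pairs_le n A hA
  rw [← sum_matCount_sq, ← hT] at hP
  have hP' : (#{p ∈ T ×ˢ T | cofVec p.1 = cofVec p.2} : ℝ) ≤
      (∑ i ∈ range (n + 1), (#A : ℝ) ^ i) *
        ∑ l ∈ univ.filter (fun l : F => l ≠ 0), (matCount F n A l : ℝ) ^ 2 := by
    exact_mod_cast hP
  have hXT : (#X : ℝ) * #T ≤ (#A : ℝ) ^ ((n + 1) ^ 2) := by
    have : #X * #T ≤ #A ^ ((n + 1) ^ 2) := by
      refine (Nat.mul_le_mul hXc hTc).trans_eq ?_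
      rw [← pow_add]
      congr 1
      ring
    exact_mod_cast this
  have hXc' : (#X : ℝ) ≤ (#A : ℝ) ^ (n + 1) := by exact_mod_cast hXc
  calc _ ≤ ∑ l : F, (∑ x ∈ X, (#{R ∈ T | x ⬝ᵥ cofVec R = l} : ℝ)) ^ 2 := by
        rw [sum_congr rfl (g := fun l =>
          (∑ x ∈ X, (#{R ∈ T | x ⬝ᵥ cofVec R = l} : ℝ)) ^ 2)]
        · exact sum_le_sum_of_subset_of_nonneg (filter_subset _ _) fun _ _ _ => sq_nonneg _
        · intro l hl
          rw [matCount_succ n A l (by simpa using hl)]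
          push_cast
          rfl
    _ ≤ ((#X : ℝ) * #T) ^ 2 / Fintype.card F
        + #X * (#A * (Fintype.card F : ℝ) ^ n * #{p ∈ T ×ˢ T | cofVec p.1 = cofVec p.2}) :=
      moment_le n #A X T cofVec (card_scaling_le _ A)
    _ ≤ ((#A : ℝ) ^ ((n + 1) ^ 2)) ^ 2 / Fintype.card F
        + (#A : ℝ) ^ (n + 1) * (#A * (Fintype.card F : ℝ) ^ n *
          ((∑ i ∈ range (n + 1), (#A : ℝ) ^ i) *
        ∑ l ∈ univ.filter (fun l : F => l ≠ 0), (matCount F n A l : ℝ) ^ 2)) := by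
      gcongr
    _ = _ := by
      rw [← pow_mul, mul_comm _ 2]
      ring
end

section
/- Fix an integer d ≥ 2. There exists a constant C > 0 (depending only on d) such that for every power q of an odd prime and every subset A ⊆ F_q, one has Σ_{l ∈ F_q, l ≠ 0} N_d(A;l)² ≤ C·(|A|^{2d²}/q + q^{d(d−1)/2}·|A|^{d(d+1)−1}). -/
open Finset

set_option linter.unusedSectionVars false

namespace DetMoment

variable {F : Type} [Field F] [Fintype F] [DecidableEq F]

/-! ### Counting lemmas -/

/-- A linear form with nonzero `i`-th coefficient, together with the coordinates other than the
`i`-th, determines a vector. -/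
lemma eq_of_dot {k : ℕ} (v z z' : Fin (k + 1) → F) (i : Fin (k + 1)) (hi : v i ≠ 0)
    (h : ∑ j, z j * v j = ∑ j, z' j * v j)
    (hz : ∀ j, z (i.succAbove j) = z' (i.succAbove j)) : z = z' := by
  rw [Fin.sum_univ_succAbove _ i, Fin.sum_univ_succAbove _ i] at h
  simp only [hz] at h
  have h2 : z i = z' i := mul_right_cancel₀ hi (add_right_cancel h)
  funext j
  rcases Fin.eq_self_or_eq_succAbove i j with rfl | ⟨j, rfl⟩
  · exact h2
  · exact hz j

lemma sum_fiber_sq {ι : Type*} (S : Finset ι) (f : ι → F) :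
    ∑ t, (#{p ∈ S | f p = t}) ^ 2 = #{p ∈ S ×ˢ S | f p.1 = f p.2} := by
  rw [Finset.card_eq_sum_card_fiberwise (f := fun p : ι × ι => f p.1) (t := Finset.univ)
    (fun _ _ => by simp)]
  refine Finset.sum_congr rfl fun t _ => ?_
  rw [sq, ← Finset.card_product]
  congr 1
  ext ⟨a, b⟩
  simp only [mem_product, mem_filter]
  constructor
  · rintro ⟨⟨h1, h2⟩, h3, h4⟩
    exact ⟨⟨⟨h1, h3⟩, h2.trans h4.symm⟩, h2⟩
  · rintro ⟨⟨⟨h1, h3⟩, h4⟩, h2⟩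
    exact ⟨⟨h1, h2⟩, h3, h4 ▸ h2⟩

/-- The number of pairs in `S` on which the linear form `x · c(·)` agrees. -/
def coll {ι : Type*} {m : ℕ} (S : Finset ι) (c : ι → Fin m → F) (x : Fin m → F) : ℕ :=
  #{p ∈ S ×ˢ S | ∑ j, x j * c p.1 j = ∑ j, x j * c p.2 j}

/-- `coll` is at least its mean, by Cauchy–Schwarz. -/
lemma coll_ge {ι : Type*} {m : ℕ} (S : Finset ι) (c : ι → Fin m → F) (x : Fin m → F) :
    0 ≤ (coll S c x : ℝ) - (#S : ℝ) ^ 2 / Fintype.card F := by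
  have hq : (0 : ℝ) < Fintype.card F := by exact_mod_cast Fintype.card_pos
  have h1 := sum_fiber_sq S (fun p => ∑ j, x j * c p j)
  have h2 : #S = ∑ t : F, #{p ∈ S | ∑ j, x j * c p j = t} :=
    Finset.card_eq_sum_card_fiberwise (fun _ _ => by simp)
  have h3 := sq_sum_le_card_mul_sum_sq (s := (Finset.univ : Finset F))
    (f := fun t => #{p ∈ S | ∑ j, x j * c p j = t})
  rw [h1, ← h2] at h3
  rw [sub_nonneg, div_le_iff₀ hq, mul_comm]
  exact_mod_cast h3

lemma coll_smul {ι : Type*} {m : ℕ} (S : Finset ι) (c : ι → Fin m → F) (x : Fin m → F)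
    (s : F) (hs : s ≠ 0) : coll S c (s • x) = coll S c x := by
  unfold coll
  congr 1
  ext p
  simp only [mem_filter, Pi.smul_apply, smul_eq_mul, mul_assoc, ← Finset.mul_sum,
    mul_right_inj' hs]

lemma card_hyperplane_le {k : ℕ} (v v' : Fin (k + 1) → F) (h : v ≠ v') :
    #{z : Fin (k + 1) → F | ∑ j, z j * v j = ∑ j, z j * v' j} ≤ Fintype.card F ^ k := by
  obtain ⟨i, hi⟩ := Function.ne_iff.mp h
  have : Fintype.card F ^ k = #(Finset.univ : Finset (Fin k → F)) := by simp
  rw [this]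
  refine Finset.card_le_card_of_injOn (fun z j => z (i.succAbove j)) (fun _ _ => by simp) ?_
  intro z hz z' hz' hzz
  simp only [coe_filter, mem_univ, true_and, Set.mem_ofPred_eq] at hz hz'
  refine eq_of_dot (v - v') z z' i (by simpa [sub_eq_zero] using hi) ?_ (fun j => congrFun hzz j)
  simp only [Pi.sub_apply, mul_sub, Finset.sum_sub_distrib, hz, hz', sub_self]

lemma sum_coll_univ {ι : Type*} {k : ℕ} (S : Finset ι) (c : ι → Fin (k + 1) → F) :
    ∑ z, coll S c z ≤ #{p ∈ S ×ˢ S | c p.1 = c p.2} * Fintype.card F ^ (k + 1)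
      + #{p ∈ S ×ˢ S | ¬ c p.1 = c p.2} * Fintype.card F ^ k := by
  unfold coll
  simp only [Finset.card_filter]
  rw [Finset.sum_comm, Finset.sum_mul, Finset.sum_mul, ← Finset.sum_add_distrib]
  refine Finset.sum_le_sum fun p _ => ?_
  rw [← Finset.card_filter]
  by_cases h : c p.1 = c p.2
  · simp [h]
  · simpa [h] using card_hyperplane_le _ _ h

lemma sum_var_le {ι : Type*} {k : ℕ} (S : Finset ι) (c : ι → Fin (k + 1) → F) :
    ∑ z ∈ {z : Fin (k + 1) → F | z ≠ 0}, ((coll S c z : ℝ) - (#S : ℝ) ^ 2 / Fintype.card F)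
      ≤ (Fintype.card F - 1) *
        ((Fintype.card F : ℝ) ^ k * #{p ∈ S ×ˢ S | c p.1 = c p.2}) := by
  have hq : (1 : ℝ) ≤ Fintype.card F := by exact_mod_cast Fintype.card_pos
  have hq0 : (Fintype.card F : ℝ) ≠ 0 := by positivity
  have h1 : ∑ z ∈ {z : Fin (k + 1) → F | z ≠ 0},
        ((coll S c z : ℝ) - (#S : ℝ) ^ 2 / Fintype.card F)
      = ∑ z, ((coll S c z : ℝ) - (#S : ℝ) ^ 2 / Fintype.card F)
        - ((#S : ℝ) ^ 2 - (#S : ℝ) ^ 2 / Fintype.card F) := by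
    have h0 : coll S c 0 = #S ^ 2 := by
      simp [coll, sq]
    rw [Finset.filter_ne', ← Finset.add_sum_erase _ _ (Finset.mem_univ (0 : Fin (k + 1) → F)), h0]
    push_cast
    ring
  have h2 : (∑ z, (coll S c z : ℝ)) ≤
      #{p ∈ S ×ˢ S | c p.1 = c p.2} * (Fintype.card F : ℝ) ^ (k + 1)
      + #{p ∈ S ×ˢ S | ¬ c p.1 = c p.2} * (Fintype.card F : ℝ) ^ k := by
    exact_mod_cast sum_coll_univ S c
  have h3 : (#{p ∈ S ×ˢ S | c p.1 = c p.2} : ℝ) + #{p ∈ S ×ˢ S | ¬ c p.1 = c p.2}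
      = (#S : ℝ) ^ 2 := by
    have := Finset.card_filter_add_card_filter_not (s := S ×ˢ S) (fun p => c p.1 = c p.2)
    rw [Finset.card_product, ← sq] at this
    exact_mod_cast this
  have h4 : (#S : ℝ) ^ 2 / Fintype.card F ≤ (#S : ℝ) ^ 2 := div_le_self (by positivity) hq
  rw [h1, Finset.sum_sub_distrib, Finset.sum_const, nsmul_eq_mul, Finset.card_univ]
  simp only [Fintype.card_pi, prod_const, Finset.card_univ, Fintype.card_fin]
  have h5 : (((Fintype.card F) ^ (k + 1) : ℕ) : ℝ) * ((#S : ℝ) ^ 2 / Fintype.card F)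
      = (Fintype.card F : ℝ) ^ k * (#S : ℝ) ^ 2 := by
    push_cast; field_simp; ring
  rw [h5, ← h3]
  rw [← h3] at h4
  rw [pow_succ] at h2
  linarith

/-- A line through the origin meets `A^m` in at most `|A|` nonzero points. -/
lemma card_line_le {m : ℕ} (A : Finset F) (z : Fin m → F) (hz : z ≠ 0) :
    #{s : Fˣ | ∀ i, ((s⁻¹ : Fˣ) : F) * z i ∈ A} ≤ #A := by
  obtain ⟨i, hi⟩ := Function.ne_iff.mp hz
  refine Finset.card_le_card_of_injOn (fun s => ((s⁻¹ : Fˣ) : F) * z i) ?_ ?_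
  · intro s hs
    simp only [coe_filter, mem_univ, true_and, Set.mem_ofPred_eq] at hs
    exact hs i
  · intro s _ t _ hst
    have := mul_right_cancel₀ hi hst
    exact inv_injective (Units.ext this)

/-- The nonzero vectors with all coordinates in `A`. -/
def vecs (A : Finset F) (m : ℕ) : Finset (Fin m → F) :=
  {x ∈ Fintype.piFinset fun _ => A | x ≠ 0}

lemma card_vecs_le (A : Finset F) (m : ℕ) : #(vecs A m) ≤ #A ^ m := by
  refine (Finset.card_filter_le _ _).trans ?_
  simp

lemma sum_coll_le {ι : Type*} {k : ℕ} (S : Finset ι) (c : ι → Fin (k + 1) → F) (A : Finset F) :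
    ∑ x ∈ vecs A (k + 1), (coll S c x : ℝ) ≤
      #(vecs A (k + 1)) * ((#S : ℝ) ^ 2 / Fintype.card F) +
        #A * ((Fintype.card F : ℝ) ^ k * #{p ∈ S ×ˢ S | c p.1 = c p.2}) := by
  set V : (Fin (k + 1) → F) → ℝ :=
    fun z => (coll S c z : ℝ) - (#S : ℝ) ^ 2 / Fintype.card F with hV
  have hq : (1 : ℝ) < Fintype.card F := by exact_mod_cast Fintype.one_lt_card
  have hunits : ((Fintype.card Fˣ : ℕ) : ℝ) = Fintype.card F - 1 := by
    rw [Fintype.card_units, Nat.cast_sub Fintype.card_pos]; simp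
  -- Average `V` over the dilates of each `x`, and count how often a point `z` is hit.
  have h1 : ((Fintype.card F : ℝ) - 1) * ∑ x ∈ vecs A (k + 1), V x
      ≤ #A * ∑ z ∈ {z : Fin (k + 1) → F | z ≠ 0}, V z := by
    calc ((Fintype.card F : ℝ) - 1) * ∑ x ∈ vecs A (k + 1), V x
        = ∑ s : Fˣ, ∑ x ∈ vecs A (k + 1), V ((s : F) • x) := by
          rw [← hunits]
          simp only [hV, coll_smul S c _ _ (Units.ne_zero _)]
          rw [Finset.sum_const, nsmul_eq_mul, Finset.card_univ]
      _ = ∑ s : Fˣ, ∑ z ∈ {z : Fin (k + 1) → F | z ≠ 0},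
            if ∀ i, ((s⁻¹ : Fˣ) : F) * z i ∈ A then V z else 0 := by
          refine Finset.sum_congr rfl fun s _ => ?_
          rw [← Finset.sum_filter]
          refine Finset.sum_bij' (fun x _ => (s : F) • x) (fun z _ => ((s⁻¹ : Fˣ) : F) • z)
            ?_ ?_ ?_ ?_ ?_
          · intro x hx
            simp only [vecs, mem_filter, Fintype.mem_piFinset] at hx
            simp [hx.1, hx.2]
          · intro z hz
            simp only [mem_filter, mem_univ, true_and] at hz
            simp only [vecs, mem_filter, Fintype.mem_piFinset]
            exact ⟨hz.2, smul_ne_zero (Units.ne_zero _) hz.1⟩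
          · intro x _
            simp
          · intro z _
            simp
          · intro x _
            rfl
      _ = ∑ z ∈ {z : Fin (k + 1) → F | z ≠ 0},
            (#{s : Fˣ | ∀ i, ((s⁻¹ : Fˣ) : F) * z i ∈ A} : ℝ) * V z := by
          rw [Finset.sum_comm]
          refine Finset.sum_congr rfl fun z _ => ?_
          rw [← Finset.sum_filter, Finset.sum_const, nsmul_eq_mul]
      _ ≤ ∑ z ∈ {z : Fin (k + 1) → F | z ≠ 0}, (#A : ℝ) * V z := by
          refine Finset.sum_le_sum fun z hz => ?_
          refine mul_le_mul_of_nonneg_right ?_ (coll_ge S c z)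
          exact_mod_cast card_line_le A z (by simpa using hz)
      _ = _ := by rw [Finset.mul_sum]
  have h2 := sum_var_le S c
  have h3 : ((Fintype.card F : ℝ) - 1) * ∑ x ∈ vecs A (k + 1), V x ≤
      ((Fintype.card F : ℝ) - 1) *
        (#A * ((Fintype.card F : ℝ) ^ k * #{p ∈ S ×ˢ S | c p.1 = c p.2})) := by
    refine h1.trans ((mul_le_mul_of_nonneg_left h2 (by positivity)).trans (le_of_eq ?_))
    ring
  have h4 := le_of_mul_le_mul_left h3 (by linarith)
  simp only [hV, Finset.sum_sub_distrib, Finset.sum_const, nsmul_eq_mul] at h4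
  linarith

/-! ### Matrices with entries in a set -/

/-- The `k × m` matrices with all entries in `A`. -/
def mats (A : Finset F) (k m : ℕ) : Finset (Matrix (Fin k) (Fin m) F) :=
  Fintype.piFinset fun _ => Fintype.piFinset fun _ => A

lemma mem_mats {A : Finset F} {k m : ℕ} {M : Matrix (Fin k) (Fin m) F} :
    M ∈ mats A k m ↔ ∀ i j, M i j ∈ A := by
  unfold mats
  exact Fintype.mem_piFinset.trans (forall_congr' fun i => Fintype.mem_piFinset)

lemma card_mats (A : Finset F) (k m : ℕ) : #(mats A k m) = #A ^ (m * k) := by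
  unfold mats
  refine (Fintype.card_piFinset _).trans ?_
  simp [pow_mul]

lemma matCount_eq (A : Finset F) (d : ℕ) (t : F) :
    matCount F d A t = #{M ∈ mats A d d | M.det = t} := by
  unfold matCount
  rw [← Nat.card_eq_finsetCard]
  refine Nat.card_congr (Equiv.subtypeEquivRight fun M => ?_)
  simp [mem_mats]

/-- The number of pairs of `d × d` matrices over `A` with equal nonzero determinant. -/
def pairCount (A : Finset F) (d : ℕ) : ℕ :=
  #{p ∈ mats A d d ×ˢ mats A d d | p.1.det = p.2.det ∧ p.1.det ≠ 0}

lemma sum_sq_eq (A : Finset F) (d : ℕ) :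
    ∑ l ∈ Finset.univ.filter (fun l : F => l ≠ 0), (matCount F d A l) ^ 2 = pairCount A d := by
  have h := sum_fiber_sq {M ∈ mats A d d | M.det ≠ 0} (fun M => M.det)
  have h2 : pairCount A d = #{p ∈ {M ∈ mats A d d | M.det ≠ 0} ×ˢ {M ∈ mats A d d | M.det ≠ 0} |
      p.1.det = p.2.det} := by
    unfold pairCount
    congr 1
    ext ⟨M, N⟩
    simp only [mem_filter, mem_product]
    constructor
    · rintro ⟨⟨h1, h2⟩, h3, h4⟩
      exact ⟨⟨⟨h1, h4⟩, h2, h3 ▸ h4⟩, h3⟩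
    · rintro ⟨⟨⟨h1, h4⟩, h2, _⟩, h3⟩
      exact ⟨⟨h1, h2⟩, h3, h4⟩
  rw [h2, ← h, Finset.sum_filter]
  refine Finset.sum_congr rfl fun t _ => ?_
  rw [matCount_eq, Finset.filter_filter]
  by_cases ht : t = 0
  · subst ht
    simp
  · rw [if_pos ht]
    congr 2
    refine Finset.filter_congr fun M _ => ?_
    constructor
    · intro h
      exact ⟨h ▸ ht, h⟩
    · exact fun h => h.2

/-- The signed maximal minors of a `(k+1) × k` matrix. -/
def cof {k : ℕ} (P : Matrix (Fin (k + 1)) (Fin k) F) (i : Fin (k + 1)) : F :=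
  (-1) ^ (i : ℕ) * (P.submatrix i.succAbove id).det

lemma det_eq_cof {k : ℕ} (M : Matrix (Fin (k + 1)) (Fin (k + 1)) F) :
    M.det = ∑ i, M i 0 * cof (M.submatrix id Fin.succ) i := by
  rw [Matrix.det_succ_column_zero]
  refine Finset.sum_congr rfl fun i _ => ?_
  simp only [cof, Matrix.submatrix_submatrix, Function.comp_id, Function.id_comp]
  ring

/-- The cofactor vector is orthogonal to every column. -/
lemma cof_orth {k : ℕ} (P : Matrix (Fin (k + 1)) (Fin k) F) (j : Fin k) :
    ∑ i, P i j * cof P i = 0 := by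
  have h := det_eq_cof (Matrix.of fun i => Fin.cons (P i j) (P i) :
    Matrix (Fin (k + 1)) (Fin (k + 1)) F)
  rw [Matrix.det_zero_of_column_eq (i := 0) (j := j.succ) (Fin.succ_ne_zero j).symm
    (by intro i; simp)] at h
  exact h.symm

/-- Bounds the pairs of matrices with equal nonzero cofactor vectors: deleting a row with nonzero
cofactor loses only the deleted row of the first matrix, which has `|A|^k` choices. -/
lemma cofPairs_le (A : Finset F) (k : ℕ) :
    #{p ∈ {P ∈ mats A (k + 1) k | cof P ≠ 0} ×ˢ {P ∈ mats A (k + 1) k | cof P ≠ 0} |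
      cof p.1 = cof p.2} ≤ (k + 1) * (#A ^ k * pairCount A k) := by
  have hsub : {p ∈ {P ∈ mats A (k + 1) k | cof P ≠ 0} ×ˢ {P ∈ mats A (k + 1) k | cof P ≠ 0} |
      cof p.1 = cof p.2} ⊆ (Finset.univ : Finset (Fin (k + 1))).biUnion fun i =>
        {p ∈ mats A (k + 1) k ×ˢ mats A (k + 1) k | cof p.1 = cof p.2 ∧ cof p.1 i ≠ 0} := by
    rintro ⟨P, P'⟩ hp
    simp only [mem_filter, mem_product] at hp
    obtain ⟨⟨⟨h1, h2⟩, h3, _⟩, h4⟩ := hp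
    obtain ⟨i, hi⟩ := Function.ne_iff.mp h2
    simp only [mem_biUnion, mem_filter, mem_product, mem_univ, true_and]
    exact ⟨i, ⟨h1, h3⟩, h4, hi⟩
  refine (Finset.card_le_card hsub).trans ((Finset.card_biUnion_le_card_mul _ _
    (#A ^ k * pairCount A k) ?_).trans (by simp))
  intro i _
  have hcard : #A ^ k * pairCount A k = #((Fintype.piFinset fun _ : Fin k => A) ×ˢ
      {p ∈ mats A k k ×ˢ mats A k k | p.1.det = p.2.det ∧ p.1.det ≠ 0}) := by
    rw [Finset.card_product, pairCount]; simp
  rw [hcard]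
  refine Finset.card_le_card_of_injOn
    (fun p => (p.1 i, p.1.submatrix i.succAbove id, p.2.submatrix i.succAbove id)) ?_ ?_
  · rintro ⟨P, P'⟩ hp
    simp only [coe_filter, mem_product, mem_mats, Set.mem_ofPred_eq] at hp
    obtain ⟨⟨h1, h2⟩, h3, h4⟩ := hp
    have h5 := congrFun h3 i
    have hs : ((-1 : F) ^ (i : ℕ)) ≠ 0 := pow_ne_zero _ (by simp)
    unfold cof at h4 h5
    simp only [coe_product, Set.mem_prod, mem_coe, Fintype.mem_piFinset, mem_filter, mem_product,
      mem_mats]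
    exact ⟨fun j => h1 i j, ⟨fun a b => h1 _ _, fun a b => h2 _ _⟩,
      mul_left_cancel₀ hs h5, right_ne_zero_of_mul h4⟩
  · rintro ⟨P, P'⟩ hp ⟨Q, Q'⟩ hq h
    simp only [coe_filter, mem_product, Set.mem_ofPred_eq] at hp hq
    simp only [Prod.mk.injEq] at h
    obtain ⟨hr, h1, h2⟩ := h
    have hPQ : P = Q := by
      ext a b
      rcases Fin.eq_self_or_eq_succAbove i a with rfl | ⟨a, rfl⟩
      · exact congrFun hr b
      · exact congrFun (congrFun h1 a) b
    subst hPQ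
    have hPQ' : P' = Q' := by
      ext a b
      refine congrFun (eq_of_dot (cof P) (fun a => P' a b) (fun a => Q' a b) i hp.2.2 ?_ ?_) a
      · have e1 := cof_orth P' b
        have e2 := cof_orth Q' b
        rw [← hp.2.1] at e1
        rw [← hq.2.1] at e2
        exact e1.trans e2.symm
      · intro j
        exact congrFun (congrFun h2 j) b
    rw [hPQ']

/-- Splitting off the first column bounds `pairCount` by a second moment of `x · cof P`. -/
lemma pairCount_le_coll (A : Finset F) (k : ℕ) :
    pairCount A (k + 1) ≤ #(vecs A (k + 1)) *
      ∑ x ∈ vecs A (k + 1), coll {P ∈ mats A (k + 1) k | cof P ≠ 0} cof x := by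
  set S := {P ∈ mats A (k + 1) k | cof P ≠ 0} with hS
  have hN : ∀ l : F, l ≠ 0 → matCount F (k + 1) A l ≤
      ∑ x ∈ vecs A (k + 1), #{P ∈ S | ∑ i, x i * cof P i = l} := by
    intro l hl
    rw [matCount_eq, ← Finset.card_sigma]
    refine Finset.card_le_card_of_injOn (fun M => ⟨fun i => M i 0, M.submatrix id Fin.succ⟩) ?_ ?_
    · intro M hM
      simp only [coe_filter, mem_mats, Set.mem_ofPred_eq] at hM
      obtain ⟨h1, h2⟩ := hM
      rw [det_eq_cof] at h2
      simp only [hS, coe_sigma, Set.mem_sigma_iff, mem_coe, vecs, mem_filter,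
        Fintype.mem_piFinset, mem_mats]
      refine ⟨⟨fun i => h1 i 0, ?_⟩, ⟨fun i j => h1 _ _, ?_⟩, h2⟩
      · intro h
        apply hl
        rw [← h2]
        exact Finset.sum_eq_zero fun i _ => by rw [show M i 0 = 0 from congrFun h i, zero_mul]
      · intro h
        apply hl
        rw [← h2, h]
        simp
    · intro M _ N _ h
      simp only [Sigma.mk.injEq, heq_eq_eq] at h
      ext a b
      refine Fin.cases ?_ (fun b => ?_) b
      · exact congrFun h.1 a
      · exact congrFun (congrFun h.2 a) b
  rw [← sum_sq_eq]
  calc ∑ l ∈ Finset.univ.filter (fun l : F => l ≠ 0), (matCount F (k + 1) A l) ^ 2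
      ≤ ∑ l ∈ Finset.univ.filter (fun l : F => l ≠ 0), #(vecs A (k + 1)) *
          ∑ x ∈ vecs A (k + 1), (#{P ∈ S | ∑ i, x i * cof P i = l}) ^ 2 := by
        refine Finset.sum_le_sum fun l hl => ?_
        exact (Nat.pow_le_pow_left (hN l (by simpa using hl)) 2).trans sq_sum_le_card_mul_sum_sq
    _ ≤ ∑ l, #(vecs A (k + 1)) *
          ∑ x ∈ vecs A (k + 1), (#{P ∈ S | ∑ i, x i * cof P i = l}) ^ 2 :=
        Finset.sum_le_sum_of_subset (Finset.filter_subset _ _)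
    _ = _ := by
        rw [← Finset.mul_sum, Finset.sum_comm]
        congr 1
        refine Finset.sum_congr rfl fun x _ => ?_
        exact sum_fiber_sq S (fun P => ∑ i, x i * cof P i)

/-! ### The two bounds and the induction -/

lemma pairCount_rec (A : Finset F) (k : ℕ) :
    (pairCount A (k + 1) : ℝ) ≤ (#A : ℝ) ^ (2 * (k + 1) ^ 2) / Fintype.card F +
      (k + 1) * (Fintype.card F : ℝ) ^ k * (#A : ℝ) ^ (2 * k + 2) * pairCount A k := by
  set S := {P ∈ mats A (k + 1) k | cof P ≠ 0} with hS
  have h1 : (pairCount A (k + 1) : ℝ) ≤ #(vecs A (k + 1)) *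
      ∑ x ∈ vecs A (k + 1), (coll S cof x : ℝ) := by
    exact_mod_cast pairCount_le_coll A k
  have h2 := sum_coll_le S cof A
  have h3 : (#(vecs A (k + 1)) : ℝ) ≤ (#A : ℝ) ^ (k + 1) := by
    exact_mod_cast card_vecs_le A (k + 1)
  have h4 : (#S : ℝ) ≤ (#A : ℝ) ^ (k * (k + 1)) := by
    have : #S ≤ #A ^ (k * (k + 1)) := (Finset.card_filter_le _ _).trans (card_mats A _ _).le
    exact_mod_cast this
  have h5 : (#{p ∈ S ×ˢ S | cof p.1 = cof p.2} : ℝ) ≤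
      (k + 1) * ((#A : ℝ) ^ k * pairCount A k) := by
    exact_mod_cast cofPairs_le A k
  calc (pairCount A (k + 1) : ℝ)
      ≤ #(vecs A (k + 1)) * (#(vecs A (k + 1)) * ((#S : ℝ) ^ 2 / Fintype.card F) +
        #A * ((Fintype.card F : ℝ) ^ k * #{p ∈ S ×ˢ S | cof p.1 = cof p.2})) :=
        h1.trans (mul_le_mul_of_nonneg_left h2 (by positivity))
    _ ≤ (#A : ℝ) ^ (k + 1) * ((#A : ℝ) ^ (k + 1) *
          (((#A : ℝ) ^ (k * (k + 1))) ^ 2 / Fintype.card F) +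
        #A * ((Fintype.card F : ℝ) ^ k * ((k + 1) * ((#A : ℝ) ^ k * pairCount A k)))) := by
        gcongr
    _ = _ := by
        have e : (#A : ℝ) ^ (2 * (k + 1) ^ 2) =
            (#A : ℝ) ^ (k + 1) * (#A : ℝ) ^ (k + 1) * ((#A : ℝ) ^ (k * (k + 1))) ^ 2 := by
          rw [← pow_mul, ← pow_add, ← pow_add]; congr 1; ring
        rw [e]
        ring

lemma pairCount_trivial (A : Finset F) (k : ℕ) :
    pairCount A (k + 1) ≤ (k + 1) * (#A ^ (k + k * (k + 1)) * #A ^ ((k + 1) * (k + 1))) := by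
  have hsub : {p ∈ mats A (k + 1) (k + 1) ×ˢ mats A (k + 1) (k + 1) |
      p.1.det = p.2.det ∧ p.1.det ≠ 0} ⊆
      (Finset.univ : Finset (Fin (k + 1))).biUnion fun i =>
        {p ∈ mats A (k + 1) (k + 1) ×ˢ mats A (k + 1) (k + 1) |
          p.1.det = p.2.det ∧ cof (p.1.submatrix id Fin.succ) i ≠ 0} := by
    rintro ⟨M, N⟩ hp
    simp only [mem_filter] at hp
    obtain ⟨h1, h2, h3⟩ := hp
    rw [det_eq_cof M] at h3
    obtain ⟨i, _, hi⟩ := Finset.exists_ne_zero_of_sum_ne_zero h3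
    simp only [mem_biUnion, mem_filter, mem_univ, true_and]
    exact ⟨i, h1, h2, right_ne_zero_of_mul hi⟩
  refine (Finset.card_le_card hsub).trans ((Finset.card_biUnion_le_card_mul _ _
    (#A ^ (k + k * (k + 1)) * #A ^ ((k + 1) * (k + 1))) ?_).trans (by simp))
  intro i _
  have hcard : #A ^ (k + k * (k + 1)) * #A ^ ((k + 1) * (k + 1)) =
      #(((Fintype.piFinset fun _ : Fin k => A) ×ˢ mats A (k + 1) k) ×ˢ
        mats A (k + 1) (k + 1)) := by
    rw [Finset.card_product, Finset.card_product, card_mats, card_mats]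
    simp [pow_add]
  rw [hcard]
  refine Finset.card_le_card_of_injOn
    (fun p => ((fun j => p.1 (i.succAbove j) 0, p.1.submatrix id Fin.succ), p.2)) ?_ ?_
  · rintro ⟨M, N⟩ hp
    simp only [coe_filter, mem_product, mem_mats, Set.mem_ofPred_eq] at hp
    simp only [coe_product, Set.mem_prod, mem_coe, Fintype.mem_piFinset, mem_mats]
    exact ⟨⟨fun j => hp.1.1 _ _, fun a b => hp.1.1 _ _⟩, hp.1.2⟩
  · rintro ⟨M, N⟩ hp ⟨M', N'⟩ hq h
    simp only [coe_filter, mem_product, Set.mem_ofPred_eq] at hp hq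
    simp only [Prod.mk.injEq] at h
    obtain ⟨⟨h1, h2⟩, rfl⟩ := h
    have hcol := eq_of_dot (cof (M.submatrix id Fin.succ)) (fun a => M a 0) (fun a => M' a 0) i
      hp.2.2 (by
        rw [← det_eq_cof M, h2, ← det_eq_cof M', hp.2.1, hq.2.1]) (fun j => congrFun h1 j)
    have : M = M' := by
      ext a b
      refine Fin.cases ?_ (fun b => ?_) b
      · exact congrFun hcol a
      · exact congrFun (congrFun h2 a) b
    rw [this]

/-- The constant of the theorem for `(k+1) × (k+1)` matrices. -/
def const : ℕ → ℝ
  | 0 => 1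
  | k + 1 => 1 + (k + 2) * const k

lemma const_ge (k : ℕ) : (k : ℝ) + 1 ≤ const k := by
  induction k with
  | zero => simp [const]
  | succ k ih =>
    simp only [const]
    push_cast
    nlinarith [(Nat.cast_nonneg k : (0 : ℝ) ≤ k)]

/-- The theorem for `d = k + 1`, with `r = k(k+1)/2`. -/
lemma pairCount_bound (A : Finset F) (k r : ℕ) (hr : 2 * r = k * (k + 1)) :
    (pairCount A (k + 1) : ℝ) ≤ const k *
      ((#A : ℝ) ^ (2 * (k + 1) ^ 2) / Fintype.card F +
        (Fintype.card F : ℝ) ^ r * (#A : ℝ) ^ (k * k + 3 * k + 1)) := by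
  have hq : (0 : ℝ) < Fintype.card F := by exact_mod_cast Fintype.card_pos
  rcases le_total ((#A : ℝ) ^ 2) (Fintype.card F) with hn | hn
  · -- For small `A` the trivial bound is enough.
    have h1 : (pairCount A (k + 1) : ℝ) ≤
        (k + 1) * ((#A : ℝ) ^ (k + k * (k + 1)) * (#A : ℝ) ^ ((k + 1) * (k + 1))) := by
      exact_mod_cast pairCount_trivial A k
    have e : (#A : ℝ) ^ (k + k * (k + 1)) * (#A : ℝ) ^ ((k + 1) * (k + 1)) =
        ((#A : ℝ) ^ 2) ^ r * (#A : ℝ) ^ (k * k + 3 * k + 1) := by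
      rw [← pow_mul, hr, ← pow_add, ← pow_add]; congr 1; ring
    rw [e] at h1
    have hc := const_ge k
    calc (pairCount A (k + 1) : ℝ)
        ≤ (k + 1) * (((#A : ℝ) ^ 2) ^ r * (#A : ℝ) ^ (k * k + 3 * k + 1)) := h1
      _ ≤ const k * ((Fintype.card F : ℝ) ^ r * (#A : ℝ) ^ (k * k + 3 * k + 1)) := by
          have : (0 : ℝ) ≤ const k := le_trans (by positivity) hc
          gcongr
      _ ≤ _ := by
          have : (0 : ℝ) ≤ const k := le_trans (by positivity) hc
          refine mul_le_mul_of_nonneg_left ?_ this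
          have : (0 : ℝ) ≤ (#A : ℝ) ^ (2 * (k + 1) ^ 2) / Fintype.card F := by positivity
          linarith
  · induction k generalizing r with
    | zero =>
      have h1 : (pairCount A 1 : ℝ) ≤ #A := by
        have := pairCount_trivial A 0
        simp only [zero_add, pow_zero, one_mul, mul_one, pow_one] at this
        exact_mod_cast this
      have : r = 0 := by omega
      subst this
      have : (0 : ℝ) ≤ (#A : ℝ) ^ 2 / Fintype.card F := by positivity
      simp only [const]
      norm_num
      linarith
    | succ k ih =>
      obtain ⟨r', rfl⟩ : ∃ r', r = r' + (k + 1) := ⟨r - (k + 1), by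
        have : k + 1 ≤ r := by nlinarith
        omega⟩
      have h1 := ih r' (by nlinarith)
      have h2 := pairCount_rec A (k + 1)
      have hc : (0 : ℝ) ≤ const k := le_trans (by positivity) (const_ge k)
      set n : ℝ := (#A : ℝ) with hnn
      set q : ℝ := (Fintype.card F : ℝ) with hqq
      have hn0 : 0 ≤ n := by positivity
      -- The main term of the inductive hypothesis is absorbed thanks to `q ≤ n²`.
      have h3 : q ^ (k + 1) * n ^ (2 * (k + 1) + 2) * (n ^ (2 * (k + 1) ^ 2) / q) ≤
          n ^ (2 * (k + 1 + 1) ^ 2) / q := by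
        have e : n ^ (2 * (k + 1 + 1) ^ 2) =
            (n ^ 2) ^ (k + 1) * n ^ (2 * (k + 1) + 2) * n ^ (2 * (k + 1) ^ 2) := by
          rw [← pow_mul, ← pow_add, ← pow_add]; congr 1; ring
        rw [e, ← mul_div_assoc]
        gcongr
      have h4 : q ^ (k + 1) * n ^ (2 * (k + 1) + 2) * (q ^ r' * n ^ (k * k + 3 * k + 1)) =
          q ^ (r' + (k + 1)) * n ^ ((k + 1) * (k + 1) + 3 * (k + 1) + 1) := by
        have e : n ^ ((k + 1) * (k + 1) + 3 * (k + 1) + 1) =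
            n ^ (2 * (k + 1) + 2) * n ^ (k * k + 3 * k + 1) := by
          rw [← pow_add]; congr 1; ring
        rw [e, pow_add]; ring
      set X := n ^ (2 * (k + 1 + 1) ^ 2) / q
      set Y := q ^ (r' + (k + 1)) * n ^ ((k + 1) * (k + 1) + 3 * (k + 1) + 1)
      have hY : 0 ≤ Y := by positivity
      calc (pairCount A (k + 1 + 1) : ℝ)
          ≤ X + (((k + 1 : ℕ) : ℝ) + 1) * q ^ (k + 1) * n ^ (2 * (k + 1) + 2) *
            pairCount A (k + 1) := h2
        _ ≤ X + (((k + 1 : ℕ) : ℝ) + 1) * q ^ (k + 1) * n ^ (2 * (k + 1) + 2) *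
            (const k * (n ^ (2 * (k + 1) ^ 2) / q + q ^ r' * n ^ (k * k + 3 * k + 1))) := by
            gcongr
        _ = X + (((k + 1 : ℕ) : ℝ) + 1) * const k *
            (q ^ (k + 1) * n ^ (2 * (k + 1) + 2) * (n ^ (2 * (k + 1) ^ 2) / q) + Y) := by
            rw [← h4]; ring
        _ ≤ X + (((k + 1 : ℕ) : ℝ) + 1) * const k * (X + Y) := by
            gcongr
        _ ≤ const (k + 1) * (X + Y) := by
            simp only [const]
            push_cast
            nlinarith

end DetMoment

theorem stmt_8 (d : ℕ) (hd : 2 ≤ d) :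
    ∃ C : ℝ, 0 < C ∧
      ∀ (F : Type) [Field F] [Fintype F] [DecidableEq F], Odd (Fintype.card F) →
        ∀ A : Finset F,
          ∑ l ∈ Finset.univ.filter (fun l : F => l ≠ 0), (matCount F d A l : ℝ) ^ 2 ≤
            C * ((A.card : ℝ) ^ (2 * d ^ 2) / (Fintype.card F : ℝ) +
              (Fintype.card F : ℝ) ^ (d * (d - 1) / 2) * (A.card : ℝ) ^ (d * (d + 1) - 1)) := by
  obtain ⟨k, rfl⟩ : ∃ k, d = k + 1 := ⟨d - 1, by omega⟩
  refine ⟨DetMoment.const k, lt_of_lt_of_le (by positivity) (DetMoment.const_ge k), ?_⟩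
  intro F _ _ _ _ A
  have h1 := DetMoment.pairCount_bound A k ((k + 1) * k / 2) (by
    rw [mul_comm (k + 1) k]
    exact Nat.mul_div_cancel' (Nat.even_mul_succ_self k).two_dvd)
  have h2 : (k + 1) * (k + 1 + 1) - 1 = k * k + 3 * k + 1 := by
    rw [Nat.sub_eq_iff_eq_add (by nlinarith)]; ring
  rw [← DetMoment.sum_sq_eq] at h1
  push_cast at h1
  rw [h2, Nat.add_sub_cancel]
  exact h1
end

section
/- Fix reals ε > 0 and K > 0. There exists a constant C > 0 (depending only on ε and K) such that for every odd prime p and every integer H with 1 ≤ H ≤ (p−1)/2 and H ≤ K·p^{1/2}, the number of 8-tuples (x_1, x_2, y_1, y_2, u_1, u_2, v_1, v_2) of integers, each lying in the interval [−H, H], satisfying the congruence x_1 y_2 − x_2 y_1 ≡ u_1 v_2 − u_2 v_1 (mod p), is at most C·H^{6+ε}. -/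
/-!
Only the pair `(v 5, v 6)` is treated arithmetically; write `I = [-H, H]`.

* If `v 5 * v 6 ≠ 0`, fix the other six coordinates. The congruence fixes `v 5 * v 6` modulo `p`,
  and `|v 5 * v 6| ≤ H² ≤ K² p`, so the quotient of `v 5 * v 6` by `p` takes boundedly many
  values. Once the quotient is fixed too, `v 5 * v 6` is a fixed nonzero integer `m`
  with `|m| ≤ H²`, and the divisor bound `d(m) ≪ |m| ^ (ε / 2)` leaves `O(H ^ ε)` pairs
  (`card_nondegenerate_le`).
* If `v 5 * v 6 = 0`, then at most one of `v 5`, `v 6` is free, and one of `v 0`, `v 3` is determined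
  by the remaining coordinates: either `v 0 = 0`, or `v 3` is determined modulo `p`, hence
  determined, as `2 * H + 1 ≤ p`. This gives `O(H ^ 6)` tuples (`card_degenerate_le`).

The divisor bound `card_divisors_le` is proved by comparing `∏ (e_q + 1)` with `∏ q ^ (δ e_q)`
prime by prime: a constant is lost only at the finitely many primes `q < 2 ^ (1 / δ)`.
-/

open Finset

/-- The divisor bound `d(n) ≪_δ n ^ δ`. -/
lemma card_divisors_le (δ : ℝ) (hδ : 0 < δ) :
    ∃ D : ℝ, 0 < D ∧ ∀ n : ℕ, n ≠ 0 → (#n.divisors : ℝ) ≤ D * (n : ℝ) ^ δ := by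
  have hl : 0 < Real.log 2 := Real.log_pos (by norm_num)
  set A : ℝ := 1 + 1 / (δ * Real.log 2) with hA
  have hA1 : 1 ≤ A := by
    have : 0 < 1 / (δ * Real.log 2) := by positivity
    linarith
  set M : ℕ := ⌈(2 : ℝ) ^ (1 / δ)⌉₊ with hM
  refine ⟨A ^ M, by positivity, fun n hn => ?_⟩
  -- The local inequality at the prime `q`, with constant `A` if `q < M` and `1` otherwise.
  have key : ∀ q ∈ n.primeFactors, ((n.factorization q + 1 : ℕ) : ℝ) ≤
      (if q < M then A else 1) * ((q : ℝ) ^ n.factorization q) ^ δ := by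
    intro q hq
    have hq2 : (2 : ℝ) ≤ q := by exact_mod_cast (Nat.prime_of_mem_primeFactors hq).two_le
    generalize n.factorization q = e
    have hcomm : ((q : ℝ) ^ e) ^ δ = ((q : ℝ) ^ δ) ^ e := by
      rw [← Real.rpow_natCast, ← Real.rpow_natCast, ← Real.rpow_mul (by positivity),
        ← Real.rpow_mul (by positivity), mul_comm]
    rw [hcomm]
    split_ifs with h
    · have h1 : 1 + δ * Real.log 2 ≤ (q : ℝ) ^ δ := by
        calc 1 + δ * Real.log 2 ≤ Real.exp (Real.log 2 * δ) := by
              have := Real.add_one_le_exp (Real.log 2 * δ)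
              linarith
          _ = (2 : ℝ) ^ δ := by rw [Real.rpow_def_of_pos (by norm_num)]
          _ ≤ (q : ℝ) ^ δ := by gcongr
      have h2 : 1 + e * (δ * Real.log 2) ≤ ((q : ℝ) ^ δ) ^ e :=
        (one_add_mul_le_pow (by nlinarith [mul_pos hδ hl]) e).trans (by gcongr)
      have h3 : ((e + 1 : ℕ) : ℝ) ≤ A * (1 + e * (δ * Real.log 2)) := by
        have h4 : A * (1 + e * (δ * Real.log 2))
            = 1 + e + (1 / (δ * Real.log 2) + e * (δ * Real.log 2)) := by
          rw [hA]; field_simp; ring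
        have h5 : 0 < 1 / (δ * Real.log 2) + e * (δ * Real.log 2) := by positivity
        push_cast
        linarith
      exact h3.trans (by gcongr)
    · have h1 : (2 : ℝ) ≤ (q : ℝ) ^ δ := by
        have h2 : (2 : ℝ) ^ (1 / δ) ≤ q :=
          (Nat.le_ceil _).trans (by exact_mod_cast not_lt.mp h)
        calc (2 : ℝ) = ((2 : ℝ) ^ (1 / δ)) ^ δ := by
              rw [← Real.rpow_mul (by norm_num), one_div_mul_cancel hδ.ne', Real.rpow_one]
          _ ≤ _ := by gcongr
      rw [one_mul]
      calc ((e + 1 : ℕ) : ℝ) ≤ (2 : ℝ) ^ e := by exact_mod_cast Nat.lt_two_pow_self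
        _ ≤ _ := by gcongr
  have hprod : ∏ q ∈ n.primeFactors, ((q : ℝ) ^ n.factorization q) = n := by
    conv_rhs => rw [← Nat.prod_factorization_pow_eq_self hn]
    rw [Finsupp.prod]
    push_cast
    rfl
  rw [Nat.card_divisors hn]
  calc ((∏ q ∈ n.primeFactors, (n.factorization q + 1) : ℕ) : ℝ)
      = ∏ q ∈ n.primeFactors, ((n.factorization q + 1 : ℕ) : ℝ) := by push_cast; rfl
    _ ≤ ∏ q ∈ n.primeFactors,
          ((if q < M then A else 1) * ((q : ℝ) ^ n.factorization q) ^ δ) :=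
        prod_le_prod (fun _ _ => by positivity) key
    _ = A ^ #(n.primeFactors.filter (· < M)) * (n : ℝ) ^ δ := by
        rw [prod_mul_distrib, Real.finsetProd_rpow _ _ (fun _ _ => by positivity), hprod,
          prod_ite]
        simp
    _ ≤ A ^ M * (n : ℝ) ^ δ := by
        gcongr
        calc #(n.primeFactors.filter (· < M)) ≤ #(range M) :=
              card_le_card fun x hx => by simpa using (mem_filter.mp hx).2
          _ = M := card_range M

/-- A finite set of integer pairs with a common nonzero product `m` has at most `2 d(|m|)`
elements. -/
lemma card_pairs_le_s12 (m : ℤ) (hm : m ≠ 0) (s : Finset (ℤ × ℤ)) (hs : ∀ g ∈ s, g.1 * g.2 = m) :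
    #s ≤ 2 * #m.natAbs.divisors := by
  have h : #s ≤ #(m.natAbs.divisors ×ˢ (univ : Finset Bool)) := by
    refine card_le_card_of_injOn (fun g => (g.1.natAbs, decide (0 ≤ g.1))) ?_ ?_
    · intro g hg
      have h1 : g.1 ∣ m := ⟨_, (hs g hg).symm⟩
      simpa [Int.natAbs_dvd_natAbs, h1, hm] using le_or_gt 0 g.1
    · rintro ⟨a, b⟩ hg ⟨c, d⟩ hg' h
      have h1 : a * b = m := hs _ hg
      have h2 : c * d = m := hs _ hg'
      simp only [Prod.mk.injEq, decide_eq_decide] at h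
      have hac : a = c := by omega
      subst hac
      have ha : a ≠ 0 := by rintro rfl; simp at h1; exact hm h1.symm
      rw [mul_left_cancel₀ ha (h1.trans h2.symm)]
  simpa [mul_comm] using h

/-- The solutions in the box `[-H, H] ^ 8`, as a finset. -/
noncomputable def sols (p H : ℕ) : Finset (Fin 8 → ℤ) :=
  (Fintype.piFinset fun _ => Icc (-(H : ℤ)) (H : ℤ)).filter fun v =>
    Int.ModEq (p : ℤ) (v 0 * v 3 - v 1 * v 2) (v 4 * v 7 - v 5 * v 6)

lemma mem_sols {p H : ℕ} {v : Fin 8 → ℤ} : v ∈ sols p H ↔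
    (∀ i, v i ∈ Icc (-(H : ℤ)) (H : ℤ)) ∧
      Int.ModEq (p : ℤ) (v 0 * v 3 - v 1 * v 2) (v 4 * v 7 - v 5 * v 6) := by
  simp [sols]

lemma card_degenerate_le (p H : ℕ) (hp : p.Prime) (hHp : 2 * H + 1 ≤ p) :
    #((sols p H).filter fun v => v 5 * v 6 = 0) ≤ 4 * (2 * H + 1) ^ 6 := by
  set I := Icc (-(H : ℤ)) (H : ℤ) with hI
  have hcard : #I = 2 * H + 1 := by simp [hI]; omega
  have h : #((sols p H).filter fun v => v 5 * v 6 = 0) ≤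
      #((univ : Finset Bool) ×ˢ (univ : Finset Bool) ×ˢ I ×ˢ I ×ˢ I ×ˢ I ×ˢ I ×ˢ I) := by
    -- The two flags record whether `v 5 = 0` and whether `v 0 = 0`; the two `if`s record
    -- the coordinates left free in each case.
    refine card_le_card_of_injOn (fun v => (decide (v 5 = 0), decide (v 0 = 0),
      (if v 5 = 0 then v 6 else v 5), v 1, v 2, v 4, v 7, (if v 0 = 0 then v 3 else v 0))) ?_ ?_
    · intro v hv
      have hv := (mem_sols.mp (mem_filter.mp hv).1).1
      have h1 : (if v 5 = 0 then v 6 else v 5) ∈ I := by split_ifs <;> exact hv _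
      have h2 : (if v 0 = 0 then v 3 else v 0) ∈ I := by split_ifs <;> exact hv _
      simp only [coe_product, Set.mem_prod, mem_coe, mem_univ, true_and]
      exact ⟨h1, hv 1, hv 2, hv 4, hv 7, h2⟩
    · intro v hv w hw h
      obtain ⟨hv, hv0⟩ := mem_filter.mp hv
      obtain ⟨hw, hw0⟩ := mem_filter.mp hw
      obtain ⟨hvI, hv⟩ := mem_sols.mp hv
      obtain ⟨hwI, hw⟩ := mem_sols.mp hw
      simp only [Prod.mk.injEq, decide_eq_decide] at h
      obtain ⟨h5, h0, h56, h1, h2, h4, h7, h03⟩ := h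
      have e56 : v 5 = w 5 ∧ v 6 = w 6 := by
        by_cases hz : v 5 = 0
        · have hz' := h5.mp hz
          simp only [hz, hz', if_true] at h56
          exact ⟨hz.trans hz'.symm, h56⟩
        · have hz' : w 5 ≠ 0 := fun h => hz (h5.mpr h)
          simp only [hz, hz', if_false] at h56
          have a := (mul_eq_zero.mp hv0).resolve_left hz
          have b := (mul_eq_zero.mp hw0).resolve_left hz'
          exact ⟨h56, a.trans b.symm⟩
      have e03 : v 0 = w 0 ∧ v 3 = w 3 := by
        by_cases hz : v 0 = 0
        · have hz' := h0.mp hz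
          simp only [hz, hz', if_true] at h03
          exact ⟨hz.trans hz'.symm, h03⟩
        · have hz' : w 0 ≠ 0 := fun h => hz (h0.mpr h)
          simp only [hz, hz', if_false] at h03
          refine ⟨h03, ?_⟩
          have hd : (p : ℤ) ∣ v 0 * (v 3 - w 3) := by
            have := dvd_sub hv.dvd hw.dvd
            rw [hv0, hw0, h1, h2, h4, h7, ← h03] at this
            rw [← dvd_neg]
            convert this using 1
            ring
          have b0 := mem_Icc.mp (hvI 0)
          have b3 := mem_Icc.mp (hvI 3)
          have b3' := mem_Icc.mp (hwI 3)
          rcases (Nat.prime_iff_prime_int.mp hp).dvd_or_dvd hd with hd | hd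
          · exact absurd (Int.eq_zero_of_abs_lt_dvd hd (by rw [abs_lt]; omega)) hz
          · have := Int.eq_zero_of_abs_lt_dvd hd (by rw [abs_lt]; omega)
            omega
      funext i
      fin_cases i
      exacts [e03.1, h1, h2, e03.2, h4, e56.1, e56.2, h7]
  refine h.trans (le_of_eq ?_)
  simp only [card_product, hcard, card_univ, Fintype.card_bool]
  ring

/-- Here `L` bounds the quotient of `v 5 * v 6` by `p`, and `B` bounds `d(|v 5 * v 6|)`. -/
lemma card_nondegenerate_le (p H L B : ℕ) (hp : 0 < p) (hL : H ^ 2 ≤ L * p)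
    (hB : ∀ n : ℕ, n ≠ 0 → n ≤ H ^ 2 → #n.divisors ≤ B) :
    #((sols p H).filter fun v => v 5 * v 6 ≠ 0) ≤
      2 * B * ((2 * H + 1) ^ 6 * (2 * L + 1)) := by
  classical
  set I := Icc (-(H : ℤ)) (H : ℤ) with hI
  have hcard : #I = 2 * H + 1 := by simp [hI]; omega
  set J := Icc (-(L : ℤ)) (L : ℤ) with hJ
  have hcardJ : #J = 2 * L + 1 := by simp [hJ]; omega
  have hp' : (0 : ℤ) < p := by exact_mod_cast hp
  have habs : ∀ v ∈ sols p H, |v 5 * v 6| ≤ (H : ℤ) ^ 2 := by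
    intro v hv
    have hv := (mem_sols.mp hv).1
    rw [abs_mul, sq]
    exact mul_le_mul (abs_le.mpr (mem_Icc.mp (hv 5))) (abs_le.mpr (mem_Icc.mp (hv 6)))
      (abs_nonneg _) (by positivity)
  have hT : #(I ×ˢ I ×ˢ I ×ˢ I ×ˢ I ×ˢ I ×ˢ J) = (2 * H + 1) ^ 6 * (2 * L + 1) := by
    simp only [card_product, hcard, hcardJ]
    ring
  rw [← hT]
  refine card_le_mul_card_image_of_maps_to
    (f := fun v : Fin 8 → ℤ => (v 0, v 1, v 2, v 3, v 4, v 7, (v 5 * v 6) / (p : ℤ))) ?_ _ ?_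
  · intro v hv
    have hv' := (mem_filter.mp hv).1
    have hvI := (mem_sols.mp hv').1
    have hb := abs_le.mp (habs v hv')
    have hLz : (H : ℤ) ^ 2 ≤ L * p := by exact_mod_cast hL
    have h1 : v 5 * v 6 / (p : ℤ) ∈ J := by
      rw [hJ, mem_Icc]
      exact ⟨(Int.le_ediv_iff_mul_le hp').mpr (by linarith),
        Int.ediv_le_of_le_mul hp' (by linarith)⟩
    simp only [mem_product]
    exact ⟨hvI 0, hvI 1, hvI 2, hvI 3, hvI 4, hvI 7, h1⟩
  · rintro t -
    set F := ((sols p H).filter fun v => v 5 * v 6 ≠ 0).filter fun v =>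
      (v 0, v 1, v 2, v 3, v 4, v 7, (v 5 * v 6) / (p : ℤ)) = t with hF
    rcases F.eq_empty_or_nonempty with hE | ⟨w, hw⟩
    · simp [hE]
    obtain ⟨hw1, hwt⟩ := mem_filter.mp hw
    obtain ⟨hws, hw0⟩ := mem_filter.mp hw1
    have hwm := (mem_sols.mp hws).2
    have hFw : ∀ v ∈ F, v 0 = w 0 ∧ v 1 = w 1 ∧ v 2 = w 2 ∧ v 3 = w 3 ∧ v 4 = w 4 ∧ v 7 = w 7 ∧
        v 5 * v 6 = w 5 * w 6 := by
      intro v hv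
      obtain ⟨hv1, hvt⟩ := mem_filter.mp hv
      have hvm := (mem_sols.mp (mem_filter.mp hv1).1).2
      have ht := hvt.trans hwt.symm
      simp only [Prod.mk.injEq] at ht
      obtain ⟨h0, h1, h2, h3, h4, h7, hq⟩ := ht
      refine ⟨h0, h1, h2, h3, h4, h7, ?_⟩
      rw [h0, h1, h2, h3, h4, h7] at hvm
      have hmod : v 5 * v 6 ≡ w 5 * w 6 [ZMOD p] := by
        have := (Int.ModEq.refl (w 4 * w 7)).sub (hvm.symm.trans hwm)
        simpa using this
      rw [← Int.mul_ediv_add_emod (v 5 * v 6) p, ← Int.mul_ediv_add_emod (w 5 * w 6) p, hq,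
        hmod]
    have hinj : #F ≤ #(F.image fun v => (v 5, v 6)) := by
      rw [card_image_of_injOn]
      intro v hv w' hw' h
      obtain ⟨h0, h1, h2, h3, h4, h7, -⟩ := hFw v hv
      obtain ⟨h0', h1', h2', h3', h4', h7', -⟩ := hFw w' hw'
      simp only [Prod.mk.injEq] at h
      funext i
      fin_cases i
      exacts [h0.trans h0'.symm, h1.trans h1'.symm, h2.trans h2'.symm, h3.trans h3'.symm,
        h4.trans h4'.symm, h.1, h.2, h7.trans h7'.symm]
    refine hinj.trans ((card_pairs_le_s12 (w 5 * w 6) hw0 _ ?_).trans ?_)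
    · intro g hg
      obtain ⟨v, hv, rfl⟩ := mem_image.mp hg
      exact (hFw v hv).2.2.2.2.2.2
    · refine Nat.mul_le_mul_left 2 (hB _ (Int.natAbs_ne_zero.mpr hw0) ?_)
      have := habs w hws
      rw [Int.abs_eq_natAbs] at this
      exact_mod_cast this

theorem stmt_12 (ε K : ℝ) (hε : 0 < ε) (hK : 0 < K) :
    ∃ C : ℝ, 0 < C ∧
      ∀ p : ℕ, p.Prime → Odd p →
        ∀ H : ℕ, 1 ≤ H → 2 * H + 1 ≤ p → (H : ℝ) ≤ K * (p : ℝ) ^ ((1 : ℝ) / 2) →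
          (Nat.card {v : Fin 8 → ℤ //
              (∀ i, v i ∈ Finset.Icc (-(H : ℤ)) (H : ℤ)) ∧
                Int.ModEq (p : ℤ) (v 0 * v 3 - v 1 * v 2) (v 4 * v 7 - v 5 * v 6)} : ℝ) ≤
            C * (H : ℝ) ^ ((6 : ℝ) + ε) := by
  obtain ⟨D, hD, hdiv⟩ := card_divisors_le (ε / 2) (by positivity)
  set L : ℕ := ⌈K ^ 2⌉₊ with hL
  refine ⟨3 ^ 6 * (4 + 2 * D * (2 * L + 1)), by positivity, ?_⟩
  intro p hp _ H hH hHp hHK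
  have hH1 : (1 : ℝ) ≤ H := by exact_mod_cast hH
  have hcard : Nat.card {v : Fin 8 → ℤ // (∀ i, v i ∈ Finset.Icc (-(H : ℤ)) (H : ℤ)) ∧
      Int.ModEq (p : ℤ) (v 0 * v 3 - v 1 * v 2) (v 4 * v 7 - v 5 * v 6)} = #(sols p H) := by
    exact Nat.subtype_card _ fun v => mem_sols
  have hLp : H ^ 2 ≤ L * p := by
    have h1 : (H : ℝ) ^ 2 ≤ K ^ 2 * p := by
      calc (H : ℝ) ^ 2 ≤ (K * (p : ℝ) ^ ((1 : ℝ) / 2)) ^ 2 := by gcongr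
        _ = K ^ 2 * p := by
          rw [mul_pow, ← Real.sqrt_eq_rpow, Real.sq_sqrt (by positivity)]
    have h2 : K ^ 2 * (p : ℝ) ≤ L * p := by
      gcongr
      exact Nat.le_ceil _
    exact_mod_cast h1.trans h2
  have hB : ∀ n : ℕ, n ≠ 0 → n ≤ H ^ 2 → #n.divisors ≤ ⌊D * (H : ℝ) ^ ε⌋₊ := by
    intro n hn hnH
    refine Nat.le_floor ((hdiv n hn).trans ?_)
    have h1 : (n : ℝ) ≤ (H : ℝ) ^ (2 : ℝ) := by
      rw [Real.rpow_two]
      exact_mod_cast hnH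
    calc D * (n : ℝ) ^ (ε / 2) ≤ D * ((H : ℝ) ^ (2 : ℝ)) ^ (ε / 2) := by gcongr
      _ = D * (H : ℝ) ^ ε := by
        rw [← Real.rpow_mul (by positivity), mul_div_cancel₀ _ (by norm_num)]
  set B : ℕ := ⌊D * (H : ℝ) ^ ε⌋₊ with hBdef
  have hBle : (B : ℝ) ≤ D * (H : ℝ) ^ ε := Nat.floor_le (by positivity)
  have hsum : #(sols p H) ≤ 4 * (2 * H + 1) ^ 6 + 2 * B * ((2 * H + 1) ^ 6 * (2 * L + 1)) := by
    rw [← card_filter_add_card_filter_not (s := sols p H) (fun v => v 5 * v 6 = 0)]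
    exact add_le_add (card_degenerate_le p H hp hHp)
      (card_nondegenerate_le p H L B hp.pos hLp hB)
  have hHε : 1 ≤ (H : ℝ) ^ ε := Real.one_le_rpow hH1 hε.le
  rw [hcard]
  calc (#(sols p H) : ℝ)
      ≤ 4 * (2 * H + 1) ^ 6 + 2 * B * ((2 * H + 1) ^ 6 * (2 * L + 1)) := by exact_mod_cast hsum
    _ = (2 * H + 1) ^ 6 * (4 * 1 + 2 * B * (2 * L + 1)) := by ring
    _ ≤ (2 * H + H) ^ 6 * (4 * (H : ℝ) ^ ε + 2 * (D * (H : ℝ) ^ ε) * (2 * L + 1)) := by gcongr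
    _ = 3 ^ 6 * (4 + 2 * D * (2 * L + 1)) * ((H : ℝ) ^ 6 * (H : ℝ) ^ ε) := by ring
    _ = 3 ^ 6 * (4 + 2 * D * (2 * L + 1)) * (H : ℝ) ^ ((6 : ℝ) + ε) := by
      rw [Real.rpow_add (by positivity)]
      norm_cast
end
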